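/- arXiv:2112.01280 — 2 statements merged into one kernel-verified Lean document; each statement's English description precedes it below -/
import Mathlib

section
/- Under Assumption (Lip) (r, P Lipschitz continuous with respect to the L¹ norm on ℬ₁(𝒳), and W Lipschitz continuous), there exists a Graphon Mean Field Equilibrium, i.e. a measurable policy ensemble 𝛑 and measurable mean field ensemble 𝛍 such that 𝛍 = Ψ(𝛑) and for every α ∈ [0,1] the policy π^α maximizes π ↦ J^𝛍_α(π) over all Markov policies π ∈ Π. -/
open MeasureTheory Filter
open scoped BigOperators

namespace GMFG

variable {𝒳 𝒰 : Type*}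

/-- The probability simplex 𝒫(𝒳) on a finite set, as probability mass functions. -/
def simplex (𝒳 : Type*) [Fintype 𝒳] : Set (𝒳 → ℝ) :=
  {p | (∀ x, 0 ≤ p x) ∧ ∑ x, p x = 1}

/-- The set ℬ₁(𝒳) of (sub-probability) measures with total mass at most 1,
as mass functions. -/
def subProb (𝒳 : Type*) [Fintype 𝒳] : Set (𝒳 → ℝ) :=
  {p | (∀ x, 0 ≤ p x) ∧ ∑ x, p x ≤ 1}

/-- L¹ distance between measures on a finite set. -/
noncomputable def l1dist [Fintype 𝒳] (ν ν' : 𝒳 → ℝ) : ℝ := ∑ x, |ν x - ν' x|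

/-- Markovian feedback policies π ∈ Π = 𝒫(𝒰)^{𝒯×𝒳}. -/
def IsPolicy [Fintype 𝒰] (π : ℕ → 𝒳 → 𝒰 → ℝ) : Prop :=
  ∀ t x, (∀ u, 0 ≤ π t x u) ∧ ∑ u, π t x u = 1

/-- P : 𝒳×𝒰×ℬ₁(𝒳) → 𝒫(𝒳) is a transition kernel. -/
def IsKernel [Fintype 𝒳] [Fintype 𝒰] (P : 𝒳 → 𝒰 → (𝒳 → ℝ) → 𝒳 → ℝ) : Prop :=
  ∀ x u ν, ν ∈ subProb 𝒳 → P x u ν ∈ simplex 𝒳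

/-- Lipschitz continuity of the transition kernel w.r.t. the L¹ norm. -/
def KernelLipschitz [Fintype 𝒳] [Fintype 𝒰] (P : 𝒳 → 𝒰 → (𝒳 → ℝ) → 𝒳 → ℝ) (L : ℝ) : Prop :=
  ∀ x u ν ν', ν ∈ subProb 𝒳 → ν' ∈ subProb 𝒳 → l1dist (P x u ν) (P x u ν') ≤ L * l1dist ν ν'

/-- Lipschitz continuity of the reward w.r.t. the L¹ norm. -/
def RewardLipschitz [Fintype 𝒳] [Fintype 𝒰] (r : 𝒳 → 𝒰 → (𝒳 → ℝ) → ℝ) (L : ℝ) : Prop :=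
  ∀ x u ν ν', ν ∈ subProb 𝒳 → ν' ∈ subProb 𝒳 → |r x u ν - r x u ν'| ≤ L * l1dist ν ν'

/-- A graphon: symmetric, measurable, [0,1]-valued. -/
def IsGraphon (W : ℝ → ℝ → ℝ) : Prop :=
  Measurable (Function.uncurry W) ∧ (∀ a b, W a b = W b a) ∧ ∀ a b, W a b ∈ Set.Icc (0:ℝ) 1

/-- Lipschitz continuity of a graphon on [0,1]². -/
def GraphonLipschitz (W : ℝ → ℝ → ℝ) (L : ℝ) : Prop :=
  ∀ a b a' b' : ℝ, a ∈ Set.Icc (0:ℝ) 1 → b ∈ Set.Icc (0:ℝ) 1 → a' ∈ Set.Icc (0:ℝ) 1 →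
    b' ∈ Set.Icc (0:ℝ) 1 → |W a b - W a' b'| ≤ L * (|a - a'| + |b - b'|)

/-- The neighborhood mean field 𝔾^α = ∫₀¹ W(α,β) ν^β dβ of a state marginal ensemble ν. -/
noncomputable def nbhd [Fintype 𝒳] (W : ℝ → ℝ → ℝ) (ν : ℝ → 𝒳 → ℝ) (α : ℝ) : 𝒳 → ℝ :=
  fun x => ∫ β in Set.Ioc (0:ℝ) 1, W α β * ν β x

/-- 𝛍 = Ψ(𝛑): the (measurable) mean field ensemble generated by the policy ensemble 𝛑,
via μ^α_0 = μ₀ and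
μ^α_{t+1}(x') = Σ_{x,u} μ^α_t(x) π^α_t(u|x) P(x'|x,u,𝔾^α_t). -/
def IsMeanFieldOf [Fintype 𝒳] [Fintype 𝒰] (W : ℝ → ℝ → ℝ) (P : 𝒳 → 𝒰 → (𝒳 → ℝ) → 𝒳 → ℝ)
    (μ0 : 𝒳 → ℝ) (πe : ℝ → ℕ → 𝒳 → 𝒰 → ℝ) (μ : ℕ → ℝ → 𝒳 → ℝ) : Prop :=
  (∀ t x, Measurable fun α => μ t α x) ∧
  (∀ α ∈ Set.Icc (0:ℝ) 1, μ 0 α = μ0) ∧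
  ∀ t : ℕ, ∀ α ∈ Set.Icc (0:ℝ) 1, ∀ x' : 𝒳,
    μ (t+1) α x' = ∑ x, μ t α x * ∑ u, πe α t x u * P x u (nbhd W (μ t) α) x'

/-- The law of the state of a single mean field agent with neighborhood mean field
G and policy π: X_0 ∼ μ₀, U_t ∼ π_t(·|X_t), X_{t+1} ∼ P(·|X_t,U_t,G_t). -/
noncomputable def stateLaw [Fintype 𝒳] [Fintype 𝒰] (P : 𝒳 → 𝒰 → (𝒳 → ℝ) → 𝒳 → ℝ)
    (μ0 : 𝒳 → ℝ) (G : ℕ → 𝒳 → ℝ) (π : ℕ → 𝒳 → 𝒰 → ℝ) : ℕ → 𝒳 → ℝ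
  | 0 => μ0
  | (t+1) => fun x' => ∑ x, stateLaw P μ0 G π t x * ∑ u, π t x u * P x u (G t) x'

/-- Mean field objective J(π) = E[Σ_{t<T} r(X_t,U_t,G_t)] of a single agent whose
neighborhood mean field is G. -/
noncomputable def Jmf [Fintype 𝒳] [Fintype 𝒰] (T : ℕ) (r : 𝒳 → 𝒰 → (𝒳 → ℝ) → ℝ)
    (P : 𝒳 → 𝒰 → (𝒳 → ℝ) → 𝒳 → ℝ) (μ0 : 𝒳 → ℝ) (G : ℕ → 𝒳 → ℝ) (π : ℕ → 𝒳 → 𝒰 → ℝ) : ℝ :=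
  ∑ t ∈ Finset.range T, ∑ x, stateLaw P μ0 G π t x * ∑ u, π t x u * r x u (G t)

/-- A Graphon Mean Field Equilibrium: a measurable policy ensemble 𝛑 and mean field
ensemble 𝛍 with 𝛍 = Ψ(𝛑) and π^α optimal for J^𝛍_α for every α ∈ [0,1]. -/
def IsGMFE [Fintype 𝒳] [Fintype 𝒰] (T : ℕ) (W : ℝ → ℝ → ℝ) (P : 𝒳 → 𝒰 → (𝒳 → ℝ) → 𝒳 → ℝ)
    (r : 𝒳 → 𝒰 → (𝒳 → ℝ) → ℝ) (μ0 : 𝒳 → ℝ)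
    (πe : ℝ → ℕ → 𝒳 → 𝒰 → ℝ) (μ : ℕ → ℝ → 𝒳 → ℝ) : Prop :=
  (∀ t x u, Measurable fun α => πe α t x u) ∧
  (∀ α ∈ Set.Icc (0:ℝ) 1, IsPolicy (πe α)) ∧
  IsMeanFieldOf W P μ0 πe μ ∧
  ∀ α ∈ Set.Icc (0:ℝ) 1, ∀ π' : ℕ → 𝒳 → 𝒰 → ℝ, IsPolicy π' →
    Jmf T r P μ0 (fun t => nbhd W (μ t) α) π' ≤ Jmf T r P μ0 (fun t => nbhd W (μ t) α) (πe α)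

/-- α ↦ π^α is Lipschitz continuous up to a finite set D of discontinuities. -/
def EnsembleLipschitzUpTo [Fintype 𝒳] [Fintype 𝒰] (πe : ℝ → ℕ → 𝒳 → 𝒰 → ℝ) : Prop :=
  ∃ (L : ℝ) (D : Finset ℝ), ∀ (t : ℕ) (x : 𝒳) (u : 𝒰),
    ∀ α ∈ Set.Icc (0:ℝ) 1, ∀ β ∈ Set.Icc (0:ℝ) 1,
      (∀ d ∈ D, d ∉ Set.uIcc α β) → |πe α t x u - πe β t x u| ≤ L * |α - β|

/-- Edge indicators of a simple (undirected) graph. -/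
def IsEdgeWeights {N : ℕ} (ξ : Fin N → Fin N → ℝ) : Prop :=
  (∀ i j, ξ i j = 0 ∨ ξ i j = 1) ∧ ∀ i j, ξ i j = ξ j i

/-- Empirical neighborhood mean field 𝔾ⁱ = (1/N) Σ_j ξ_{ij} δ_{X^j}. -/
noncomputable def empNbhd [Fintype 𝒳] [DecidableEq 𝒳] {N : ℕ} (ξ : Fin N → Fin N → ℝ)
    (X : Fin N → 𝒳) (i : Fin N) : 𝒳 → ℝ :=
  fun x => (N : ℝ)⁻¹ * ∑ j, ξ i j * (if X j = x then 1 else 0)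

/-- The joint law of the N agents' states at time t: X^i_0 ∼ μ₀ i.i.d.,
U^i_t ∼ π^i_t(·|X^i_t), X^i_{t+1} ∼ P(·|X^i_t,U^i_t,𝔾^i_t) conditionally independently. -/
noncomputable def jointLaw [Fintype 𝒳] [DecidableEq 𝒳] [Fintype 𝒰] {N : ℕ}
    (P : 𝒳 → 𝒰 → (𝒳 → ℝ) → 𝒳 → ℝ) (μ0 : 𝒳 → ℝ) (ξ : Fin N → Fin N → ℝ)
    (πs : Fin N → ℕ → 𝒳 → 𝒰 → ℝ) : ℕ → (Fin N → 𝒳) → ℝ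
  | 0 => fun X => ∏ i, μ0 (X i)
  | (t+1) => fun Y => ∑ X : Fin N → 𝒳, jointLaw P μ0 ξ πs t X *
      ∏ i, ∑ u, πs i t (X i) u * P (X i) u (empNbhd ξ X i) (Y i)

/-- The objective J^N_i = E[Σ_{t<T} r(X^i_t,U^i_t,𝔾^i_t)] of agent i in the N-agent game. -/
noncomputable def JN [Fintype 𝒳] [DecidableEq 𝒳] [Fintype 𝒰] {N : ℕ} (T : ℕ)
    (r : 𝒳 → 𝒰 → (𝒳 → ℝ) → ℝ) (P : 𝒳 → 𝒰 → (𝒳 → ℝ) → 𝒳 → ℝ) (μ0 : 𝒳 → ℝ)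
    (ξ : Fin N → Fin N → ℝ) (πs : Fin N → ℕ → 𝒳 → 𝒰 → ℝ) (i : Fin N) : ℝ :=
  ∑ t ∈ Finset.range T, ∑ X : Fin N → 𝒳, jointLaw P μ0 ξ πs t X *
    ∑ u, πs i t (X i) u * r (X i) u (empNbhd ξ X i)

/-- Γ_N(𝛑) = (π^{1/N},…,π^{N/N}) (agent i : Fin N has graphon index (i+1)/N). -/
noncomputable def gammaN (πe : ℝ → ℕ → 𝒳 → 𝒰 → ℝ) (N : ℕ) : Fin N → ℕ → 𝒳 → 𝒰 → ℝ :=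
  fun i => πe ((((i : ℕ) : ℝ) + 1) / N)

/-- The step graphon W_N of a finite graph: W_N(x,y) = ξ_{⌈Nx⌉,⌈Ny⌉}. -/
noncomputable def stepGraphon {N : ℕ} (ξ : Fin N → Fin N → ℝ) : ℝ → ℝ → ℝ := fun a b =>
  ∑ i : Fin N, ∑ j : Fin N,
    (if ((i : ℕ) : ℝ) / N < a ∧ a ≤ (((i : ℕ) : ℝ) + 1) / N then 1 else 0) *
    (if ((j : ℕ) : ℝ) / N < b ∧ b ≤ (((j : ℕ) : ℝ) + 1) / N then 1 else 0) * ξ i j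

/-- Assumption (W): ‖W_N − W‖_{L∞→L1} → 0, i.e.
sup_{‖g‖∞ ≤ 1} ∫₀¹ |∫₀¹ (W_N(α,β) − W(α,β)) g(β) dβ| dα → 0. -/
def OpConvergesTo (WN : (N : ℕ) → ℝ → ℝ → ℝ) (W : ℝ → ℝ → ℝ) : Prop :=
  ∀ ε > (0:ℝ), ∃ N₀ : ℕ, ∀ N ≥ N₀, ∀ g : ℝ → ℝ, Measurable g → (∀ β, |g β| ≤ 1) →
    (∫ α in Set.Ioc (0:ℝ) 1, |∫ β in Set.Ioc (0:ℝ) 1, (WN N α β - W α β) * g β|) ≤ ε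

/-- ‖W_N − W‖_{L∞→L1} = O(1/√N). -/
def OpRateSqrt (WN : (N : ℕ) → ℝ → ℝ → ℝ) (W : ℝ → ℝ → ℝ) : Prop :=
  ∃ C : ℝ, ∀ N : ℕ, 1 ≤ N → ∀ g : ℝ → ℝ, Measurable g → (∀ β, |g β| ≤ 1) →
    (∫ α in Set.Ioc (0:ℝ) 1, |∫ β in Set.Ioc (0:ℝ) 1, (WN N α β - W α β) * g β|) ≤ C / Real.sqrt N

/-- 𝛍^N_t(f) = ∫₀¹ f(X^{⌈Nα⌉}, α) dα, the integral of f against the random empirical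
step measure ensemble. -/
noncomputable def empInt [Fintype 𝒳] {N : ℕ} (f : 𝒳 → ℝ → ℝ) (X : Fin N → 𝒳) : ℝ :=
  ∑ i : Fin N, ∫ α in Set.Ioc (((i : ℕ) : ℝ) / N) ((((i : ℕ) : ℝ) + 1) / N), f (X i) α

/-- 𝛍_t(f) = ∫₀¹ Σ_x f(x,α) μ^α_t(x) dα. -/
noncomputable def mfInt [Fintype 𝒳] (f : 𝒳 → ℝ → ℝ) (ν : ℝ → 𝒳 → ℝ) : ℝ :=
  ∫ α in Set.Ioc (0:ℝ) 1, ∑ x, f x α * ν α x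

/-- The representative α_m = (m+1)/M of the m-th equivalence class Ĩ_m = (m/M,(m+1)/M]. -/
noncomputable def rep (M : ℕ) (m : Fin M) : ℝ := (((m : ℕ) : ℝ) + 1) / M

/-- Discretized neighborhood mean field 𝔾̂^{α_m} = (1/M) Σ_n W(α_m,α_n) ν^{α_n}. -/
noncomputable def approxNbhd [Fintype 𝒳] {M : ℕ} (W : ℝ → ℝ → ℝ) (ν : Fin M → 𝒳 → ℝ)
    (m : Fin M) : 𝒳 → ℝ :=
  fun x => (M : ℝ)⁻¹ * ∑ n, W (rep M m) (rep M n) * ν n x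

/-- The approximate mean field μ̂ = Ψ̂(𝛑) of the M equivalence classes method. -/
noncomputable def approxMF [Fintype 𝒳] [Fintype 𝒰] {M : ℕ} (W : ℝ → ℝ → ℝ)
    (P : 𝒳 → 𝒰 → (𝒳 → ℝ) → 𝒳 → ℝ) (μ0 : 𝒳 → ℝ) (πm : Fin M → ℕ → 𝒳 → 𝒰 → ℝ) :
    ℕ → Fin M → 𝒳 → ℝ
  | 0 => fun _ => μ0
  | (t+1) => fun m x' => ∑ x, approxMF W P μ0 πm t m x *
      ∑ u, πm m t x u * P x u (approxNbhd W (approxMF W P μ0 πm t) m) x'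

/-- A solution (𝛑, 𝛍) of the M equivalence classes method: 𝛑 is determined by policies
π^{α_m} (one per class), each optimal for the generated approximate mean field 𝛍 = Ψ̂(𝛑). -/
def IsEqClassSolution [Fintype 𝒳] [Fintype 𝒰] (T : ℕ) {M : ℕ} (W : ℝ → ℝ → ℝ)
    (P : 𝒳 → 𝒰 → (𝒳 → ℝ) → 𝒳 → ℝ) (r : 𝒳 → 𝒰 → (𝒳 → ℝ) → ℝ) (μ0 : 𝒳 → ℝ)
    (πm : Fin M → ℕ → 𝒳 → 𝒰 → ℝ) : Prop :=
  (∀ m, IsPolicy (πm m)) ∧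
  ∀ m, ∀ π' : ℕ → 𝒳 → 𝒰 → ℝ, IsPolicy π' →
    Jmf T r P μ0 (fun t => approxNbhd W (approxMF W P μ0 πm t) m) π'
      ≤ Jmf T r P μ0 (fun t => approxNbhd W (approxMF W P μ0 πm t) m) (πm m)

/-- The optimal action value function Q with k steps to go from time t,
Q(t,x,u) = r(x,u,G_t) + Σ_{x'} P(x'|x,u,G_t) max_{u'} Q(t+1,x',u'). -/
noncomputable def Qfun [Fintype 𝒳] [Fintype 𝒰] [Nonempty 𝒰] (r : 𝒳 → 𝒰 → (𝒳 → ℝ) → ℝ)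
    (P : 𝒳 → 𝒰 → (𝒳 → ℝ) → 𝒳 → ℝ) (G : ℕ → 𝒳 → ℝ) : ℕ → ℕ → 𝒳 → 𝒰 → ℝ
  | 0 => fun _ _ _ => 0
  | (k+1) => fun t x u => r x u (G t) + ∑ x', P x u (G t) x' *
      Finset.univ.sup' Finset.univ_nonempty (fun u' => Qfun r P G k (t+1) x' u')

/-- The Boltzmann (softmax) policy Φ̂_η(𝛍) of the M equivalence classes method with
horizon T, temperature η and block mean field ν. -/
noncomputable def boltzmann [Fintype 𝒳] [Fintype 𝒰] [Nonempty 𝒰] (T : ℕ) (η : ℝ)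
    (r : 𝒳 → 𝒰 → (𝒳 → ℝ) → ℝ) (P : 𝒳 → 𝒰 → (𝒳 → ℝ) → 𝒳 → ℝ) (W : ℝ → ℝ → ℝ) {M : ℕ}
    (ν : ℕ → Fin M → 𝒳 → ℝ) : Fin M → ℕ → 𝒳 → 𝒰 → ℝ :=
  fun m t x u =>
    Real.exp (Qfun r P (fun s => approxNbhd W (ν s) m) (T - t) t x u / η) /
      ∑ u' : 𝒰, Real.exp (Qfun r P (fun s => approxNbhd W (ν s) m) (T - t) t x u' / η)

/-- One step 𝛍 ↦ Ψ̂(Φ̂_η(𝛍)) of the Boltzmann fixed point iteration. -/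
noncomputable def boltzIter [Fintype 𝒳] [Fintype 𝒰] [Nonempty 𝒰] (T : ℕ) (η : ℝ)
    (r : 𝒳 → 𝒰 → (𝒳 → ℝ) → ℝ) (P : 𝒳 → 𝒰 → (𝒳 → ℝ) → 𝒳 → ℝ) (W : ℝ → ℝ → ℝ) (μ0 : 𝒳 → ℝ)
    {M : ℕ} (ν : ℕ → Fin M → 𝒳 → ℝ) : ℕ → Fin M → 𝒳 → ℝ :=
  fun t => approxMF W P μ0 (boltzmann T η r P W ν) t


section Scarf

/-- Scarf dominance. -/
def Dom {I S : Type*} (rk : I → S → ℕ) (B : Finset S) : Prop :=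
  ∀ y : S, ∃ i : I, ∀ x ∈ B, rk i y ≤ rk i x

theorem Dom.mono {I S : Type*} {rk : I → S → ℕ} {B D : Finset S} (h : Dom rk B) (hD : D ⊆ B) :
    Dom rk D := by
  intro y
  obtain ⟨i, hi⟩ := h y
  exact ⟨i, fun x hx => hi x (hD hx)⟩

/-- One candidate extension of a door. -/
theorem door_ext {I S : Type*} [Fintype S] [DecidableEq S]
    {rk : I → S → ℕ}
    {D : Finset S} (hD : Dom rk D) (f : I → S) (hfD : ∀ i, f i ∈ D)
    {j : I} (hsurj : ∀ a ∈ D, ∃ i, i ≠ j ∧ f i = a)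
    (hfmin : ∀ i, ∀ x ∈ D, rk i (f i) ≤ rk i x)
    (hM : ∃ y, ∀ i, i ≠ j → rk i (f i) < rk i y) :
    ∃ x, x ∉ D ∧ Dom rk (insert x D) ∧ (∀ i, i ≠ j → rk i (f i) < rk i x) ∧
      rk j x ≤ rk j (f j) ∧
      ∀ y, (∀ i, i ≠ j → rk i (f i) < rk i y) → rk j y ≤ rk j x := by
  classical
  obtain ⟨x, hx, hmax⟩ := Finset.exists_max_image
    (Finset.univ.filter fun y => ∀ i, i ≠ j → rk i (f i) < rk i y) (rk j)
    (by obtain ⟨y, hy⟩ := hM; exact ⟨y, by simpa using hy⟩)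
  simp only [Finset.mem_filter, Finset.mem_univ, true_and] at hx hmax
  have hxj : ∀ z ∈ D, rk j x ≤ rk j z := by
    obtain ⟨i, hi⟩ := hD x
    by_cases hij : i = j
    · subst hij; exact hi
    · have h1 := hx i hij
      exact absurd (hi _ (hfD i)) (by omega)
  refine ⟨x, ?_, ?_, hx, hxj _ (hfD j), hmax⟩
  · intro hxD
    obtain ⟨i, hij, hi⟩ := hsurj x hxD
    have := hx i hij
    rw [hi] at this
    omega
  · intro y
    by_cases hy : ∀ i, i ≠ j → rk i (f i) < rk i y
    · refine ⟨j, fun z hz => ?_⟩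
      have := hmax y hy
      rcases Finset.mem_insert.1 hz with rfl | hz
      · exact this
      · exact this.trans (hxj z hz)
    · push Not at hy
      obtain ⟨i, hij, hi⟩ := hy
      refine ⟨i, fun z hz => ?_⟩
      rcases Finset.mem_insert.1 hz with rfl | hz
      · exact hi.trans (hx i hij).le
      · exact hi.trans (hfmin i z hz)

theorem door_two {I S : Type*} [Fintype I] [DecidableEq I] [Fintype S] [DecidableEq S]
    {rk : I → S → ℕ} (hrk : ∀ i, Function.Injective (rk i))
    {D : Finset S} (hD : Dom rk D) (hcard : D.card + 1 = Fintype.card I)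
    (s : I → S) {x0 : S} (hx0 : x0 ∈ D) (hs : ∀ i j, i ≠ j → rk i x0 < rk i (s j)) :
    ∃ a b : S, a ≠ b ∧ a ∉ D ∧ b ∉ D ∧ Dom rk (insert a D) ∧ Dom rk (insert b D) ∧
      ∀ x, x ∉ D → Dom rk (insert x D) → x = a ∨ x = b := by
  classical
  have hf : ∀ i, ∃ a ∈ D, ∀ x ∈ D, rk i a ≤ rk i x := fun i =>
    Finset.exists_min_image D (rk i) ⟨x0, hx0⟩
  choose f hfD hfmin using hf
  have hsurj0 : ∀ a ∈ D, ∃ i, f i = a := by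
    intro a ha
    obtain ⟨i, hi⟩ := hD a
    exact ⟨i, hrk i (le_antisymm (hfmin i a ha) (hi _ (hfD i)))⟩
  obtain ⟨j, -, k, -, hjk, hfjk⟩ := Finset.exists_ne_map_eq_of_card_lt_of_maps_to
    (s := (Finset.univ : Finset I)) (t := D) (f := f)
    (by rw [Finset.card_univ]; omega) (fun i _ => hfD i)
  have key : ∀ j k : I, j ≠ k → f j = f k → (∀ a ∈ D, ∃ i, i ≠ j ∧ f i = a) := by
    intro j k hjk hfjk a ha
    obtain ⟨i, hi⟩ := hsurj0 a ha
    by_cases hij : i = j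
    · exact ⟨k, hjk.symm, by rw [← hfjk, ← hij, hi]⟩
    · exact ⟨i, hij, hi⟩
  have hM : ∀ j : I, ∃ y, ∀ i, i ≠ j → rk i (f i) < rk i y := fun j =>
    ⟨s j, fun i hij => (hfmin i x0 hx0).trans_lt (hs i j hij)⟩
  have inj : ∀ j k : I, j ≠ k → f j = f k → ∀ i i', i ≠ j → i' ≠ j → f i = f i' → i = i' := by
    intro j k hjk hfjk i i' hi hi' hii
    have hcard' : (Finset.univ.erase j).card ≤ D.card := by
      rw [Finset.card_erase_of_mem (Finset.mem_univ j), Finset.card_univ]; omega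
    have := Finset.inj_on_of_surj_on_of_card_le (s := Finset.univ.erase j) (t := D)
      (fun i _ => f i) (fun i _ => hfD i)
      (fun a ha => by
        obtain ⟨i, hi, h⟩ := key j k hjk hfjk a ha
        exact ⟨i, by simp [hi], h⟩) hcard'
    exact this (by simpa using hi) (by simpa using hi') hii
  obtain ⟨a, haD, hadom, haM, haj, hamax⟩ :=
    door_ext hD f hfD (key j k hjk hfjk) hfmin (hM j)
  obtain ⟨b, hbD, hbdom, hbM, hbk, hbmax⟩ :=
    door_ext hD f hfD (key k j hjk.symm hfjk.symm) hfmin (hM k)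
  refine ⟨a, b, ?_, haD, hbD, hadom, hbdom, ?_⟩
  · rintro rfl
    have := haM k hjk.symm
    omega
  · intro x hxD hx
    -- every element of `D` keeps an index at which it is minimal
    have h1 : ∀ a ∈ D, ∃ i, f i = a ∧ rk i (f i) < rk i x := by
      intro a ha
      obtain ⟨i, hi⟩ := hx a
      have e : f i = a := hrk i (le_antisymm (hfmin i a ha)
        (hi _ (Finset.mem_insert_of_mem (hfD i))))
      refine ⟨i, e, lt_of_le_of_ne (e ▸ hi x (Finset.mem_insert_self _ _)) ?_⟩
      intro h
      exact hxD (hrk i h ▸ hfD i)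
    obtain ⟨i, hi⟩ := hx x
    have hi' : ∀ z ∈ D, rk i x ≤ rk i z := fun z hz => hi z (Finset.mem_insert_of_mem hz)
    obtain ⟨i', hi'f, hi'x⟩ := h1 (f i) (hfD i)
    have hne : i' ≠ i := by
      rintro rfl
      have := hi' _ (hfD i'); omega
    have hcase : i = j ∨ i = k := by
      by_contra hcon
      push Not at hcon
      by_cases h : i' = j
      · have : i' ≠ k := h ▸ hjk
        exact hne (inj k j hjk.symm hfjk.symm i' i this hcon.2 hi'f)
      · exact hne (inj j k hjk hfjk i' i h hcon.1 hi'f)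
    have hpair : ∃ l, i ≠ l ∧ f i = f l := ⟨i', hne.symm, hi'f.symm⟩
    obtain ⟨l, hil, hfl⟩ := hpair
    have hxM : ∀ l, l ≠ i → rk l (f l) < rk l x := by
      intro l' hl'
      obtain ⟨l'', e, hlt⟩ := h1 (f l') (hfD l')
      have : l'' ≠ i := by
        rintro rfl
        have := hi' _ (hfD l''); omega
      rwa [inj i l hil hfl l'' l' this hl' e] at hlt
    have hxmax : ∀ y, (∀ l, l ≠ i → rk l (f l) < rk l y) → rk i y ≤ rk i x := by
      intro y hy
      obtain ⟨l', hl'⟩ := hx y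
      by_cases h : l' = i
      · subst h; exact hl' x (Finset.mem_insert_self _ _)
      · have := hy l' h
        have := hl' _ (Finset.mem_insert_of_mem (hfD l'))
        omega
    rcases hcase with rfl | rfl
    · exact Or.inl (hrk i (le_antisymm (hamax x hxM) (hxmax a haM)))
    · exact Or.inr (hrk i (le_antisymm (hbmax x hxM) (hxmax b hbM)))

theorem scarf {I S : Type*} [Fintype I] [DecidableEq I] [Nonempty I] [Fintype S] [DecidableEq S]
    (rk : I → S → ℕ) (hrk : ∀ i, Function.Injective (rk i)) (s : I → S) (c : S → I)
    (hcs : ∀ i, c (s i) = i) (hs0 : ∀ i y, rk i (s i) ≤ rk i y)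
    (hs : ∀ x, (∀ l, x ≠ s l) → ∀ i j, i ≠ j → rk i x < rk i (s j))
    (hT : ∃ x, ∀ l, x ≠ s l) :
    ∃ B : Finset S, Dom rk B ∧ ∀ i, ∃ b ∈ B, c b = i := by
  classical
  by_contra hno
  push Not at hno
  obtain ⟨i0⟩ := ‹Nonempty I›
  have hsinj : Function.Injective s := fun a b h => by rw [← hcs a, h, hcs b]
  set n := Fintype.card I with hn
  have hnpos : 0 < n := Fintype.card_pos_iff.2 ⟨i0⟩
  set R : Finset (Finset S) := Finset.univ.filter fun B =>
    Dom rk B ∧ B.card = n ∧ B.image c = Finset.univ.erase i0 with hR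
  set E : Finset (Finset S) := Finset.univ.filter fun D =>
    Dom rk D ∧ D.card + 1 = n ∧ D.image c = Finset.univ.erase i0 with hE
  have hEc : (Finset.univ.erase i0 : Finset I).card + 1 = n := by
    rw [Finset.card_erase_of_mem (Finset.mem_univ _), Finset.card_univ]; omega
  -- a room contains exactly two doors
  have hroom : ∀ B ∈ R, (E.filter fun D => D ⊆ B).card = 2 := by
    intro B hB
    simp only [hR, Finset.mem_filter, Finset.mem_univ, true_and] at hB
    obtain ⟨hdom, hcard, himg⟩ := hB
    obtain ⟨x, hx, y, hy, hxy, hcxy⟩ := Finset.exists_ne_map_eq_of_card_lt_of_maps_to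
      (s := B) (t := Finset.univ.erase i0) (f := c) (by omega)
      (fun b hb => himg ▸ Finset.mem_image_of_mem c hb)
    have himgx : ∀ x y, x ∈ B → y ∈ B → x ≠ y → c x = c y →
        (B.erase x).image c = Finset.univ.erase i0 := by
      intro x y hx hy hxy hcxy
      rw [← himg]
      apply le_antisymm (Finset.image_subset_image (Finset.erase_subset _ _))
      intro z hz
      obtain ⟨b, hb, rfl⟩ := Finset.mem_image.1 hz
      by_cases h : b = x
      · exact Finset.mem_image.2 ⟨y, Finset.mem_erase.2 ⟨hxy.symm, hy⟩, by rw [← hcxy, h]⟩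
      · exact Finset.mem_image.2 ⟨b, Finset.mem_erase.2 ⟨h, hb⟩, rfl⟩
    have hinj : ∀ x y, x ∈ B → y ∈ B → x ≠ y → c x = c y →
        ∀ z w, z ∈ B → w ∈ B → z ≠ x → w ≠ x → c z = c w → z = w := by
      intro x y hx hy hxy hcxy z w hz hw hzx hwx hczw
      have h := (Finset.card_image_iff (s := B.erase x) (f := c)).1 (by
        rw [himgx x y hx hy hxy hcxy, Finset.card_erase_of_mem hx]; omega)
      exact h (by simp [hz, hzx]) (by simp [hw, hwx]) hczw
    have hset : E.filter (fun D => D ⊆ B) = {B.erase x, B.erase y} := by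
      ext D
      simp only [hE, Finset.mem_filter, Finset.mem_univ, true_and, Finset.mem_insert,
        Finset.mem_singleton]
      constructor
      · rintro ⟨⟨hDd, hDc, hDi⟩, hDB⟩
        obtain ⟨z, hz⟩ : ∃ z, B \ D = {z} := Finset.card_eq_one.1 (by
          rw [Finset.card_sdiff_of_subset hDB]; omega)
        have hzB : z ∈ B \ D := by rw [hz]; simp
        have hDz : D = B.erase z := by
          rw [← Finset.sdiff_singleton_eq_erase, ← hz, Finset.sdiff_sdiff_eq_self hDB]
        rw [Finset.mem_sdiff] at hzB
        by_contra hcon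
        push Not at hcon
        have hzx : z ≠ x := by rintro rfl; exact hcon.1 hDz
        have hzy : z ≠ y := by rintro rfl; exact hcon.2 hDz
        have : c z ∈ D.image c := by
          rw [hDi, ← himg]; exact Finset.mem_image_of_mem c hzB.1
        obtain ⟨w, hw, hcw⟩ := Finset.mem_image.1 this
        have hwz : w ≠ z := by rintro rfl; exact hzB.2 hw
        have hwB := hDB hw
        by_cases hwx : w = x
        · have hwy : w ≠ y := hwx ▸ hxy
          exact hwz (hinj y x hy hx hxy.symm hcxy.symm w z hwB hzB.1 hwy hzy hcw)
        · exact hwz (hinj x y hx hy hxy hcxy w z hwB hzB.1 hwx hzx hcw)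
      · rintro (rfl | rfl)
        · exact ⟨⟨hdom.mono (Finset.erase_subset _ _), by
            rw [Finset.card_erase_of_mem hx]; omega, himgx x y hx hy hxy hcxy⟩,
            Finset.erase_subset _ _⟩
        · exact ⟨⟨hdom.mono (Finset.erase_subset _ _), by
            rw [Finset.card_erase_of_mem hy]; omega, himgx y x hy hx hxy.symm hcxy.symm⟩,
            Finset.erase_subset _ _⟩
    rw [hset, Finset.card_pair]
    intro h
    have : y ∈ B.erase x := Finset.mem_erase.2 ⟨hxy.symm, hy⟩
    rw [h] at this
    simp at this
  -- rooms over a door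
  have hmemR : ∀ D ∈ E, ∀ B, (B ∈ R ∧ D ⊆ B) ↔ ∃ x, x ∉ D ∧ Dom rk (insert x D) ∧
      B = insert x D := by
    intro D hD B
    simp only [hE, Finset.mem_filter, Finset.mem_univ, true_and] at hD
    simp only [hR, Finset.mem_filter, Finset.mem_univ, true_and]
    obtain ⟨hDd, hDc, hDi⟩ := hD
    constructor
    · rintro ⟨⟨hBd, hBc, hBi⟩, hDB⟩
      obtain ⟨z, hz⟩ : ∃ z, B \ D = {z} := Finset.card_eq_one.1 (by
          rw [Finset.card_sdiff_of_subset hDB]; omega)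
      have hzB : z ∈ B \ D := by rw [hz]; simp
      have : B = insert z D := by
        rw [← Finset.union_sdiff_of_subset hDB, hz, Finset.union_comm]; rfl
      exact ⟨z, (Finset.mem_sdiff.1 hzB).2, this ▸ hBd, this⟩
    · rintro ⟨x, hx, hd, rfl⟩
      refine ⟨⟨hd, by rw [Finset.card_insert_of_notMem hx]; omega, ?_⟩, Finset.subset_insert _ _⟩
      obtain ⟨i, hi⟩ := hno _ hd
      have hii0 : i = i0 := by
        by_contra h
        have : i ∈ D.image c := by rw [hDi]; simp [h]
        obtain ⟨b, hb, hcb⟩ := Finset.mem_image.1 this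
        exact hi b (Finset.mem_insert_of_mem hb) hcb
      subst hii0
      rw [Finset.image_insert, hDi, Finset.insert_eq_of_mem]
      simp only [Finset.mem_erase, Finset.mem_univ, and_true]
      exact hi x (Finset.mem_insert_self _ _)
  set D0 : Finset S := (Finset.univ.erase i0).image s with hD0
  have hD0E : D0 ∈ E := by
    simp only [hE, Finset.mem_filter, Finset.mem_univ, true_and]
    refine ⟨?_, ?_, ?_⟩
    · intro y
      by_cases hy : ∃ l, y = s l
      · obtain ⟨l, rfl⟩ := hy
        exact ⟨l, fun x _ => hs0 l x⟩
      · push Not at hy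
        refine ⟨i0, fun x hx => ?_⟩
        obtain ⟨l, hl, rfl⟩ := Finset.mem_image.1 hx
        exact (hs y hy i0 l (Finset.ne_of_mem_erase hl).symm).le
    · rw [hD0, Finset.card_image_of_injective _ hsinj]; exact hEc
    · rw [hD0, Finset.image_image]
      have : c ∘ s = id := funext hcs
      rw [this, Finset.image_id]
  have hdoor : ∀ D ∈ E, D ≠ D0 → (R.filter fun B => D ⊆ B).card = 2 := by
    intro D hDE hne
    have hD := hDE
    simp only [hE, Finset.mem_filter, Finset.mem_univ, true_and] at hD
    obtain ⟨hDd, hDc, hDi⟩ := hD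
    obtain ⟨x0, hx0, hx0s⟩ : ∃ x0 ∈ D, ∀ l, x0 ≠ s l := by
      by_contra hcon
      push Not at hcon
      apply hne
      apply Finset.eq_of_subset_of_card_le
      · intro x hx
        obtain ⟨l, rfl⟩ := hcon x hx
        have : c (s l) ∈ D.image c := Finset.mem_image_of_mem c hx
        rw [hDi, hcs] at this
        exact Finset.mem_image_of_mem s this
      · rw [hD0, Finset.card_image_of_injective _ hsinj]; omega
    obtain ⟨a, b, hab, ha, hb, had, hbd, huniq⟩ := door_two hrk hDd hDc s hx0 (hs x0 hx0s)
    have : R.filter (fun B => D ⊆ B) = {insert a D, insert b D} := by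
      ext B
      rw [Finset.mem_filter, hmemR D hDE]
      simp only [Finset.mem_insert, Finset.mem_singleton]
      constructor
      · rintro ⟨x, hx, hd, rfl⟩
        rcases huniq x hx hd with rfl | rfl
        · exact Or.inl rfl
        · exact Or.inr rfl
      · rintro (rfl | rfl)
        · exact ⟨a, ha, had, rfl⟩
        · exact ⟨b, hb, hbd, rfl⟩
    rw [this, Finset.card_pair]
    intro h
    have : a ∈ insert b D := h ▸ Finset.mem_insert_self a D
    rcases Finset.mem_insert.1 this with h | h
    · exact hab h
    · exact ha h
  have hdoor0 : (R.filter fun B => D0 ⊆ B).card = 1 := by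
    obtain ⟨x, hx, hxmax⟩ := Finset.exists_max_image
      (Finset.univ.filter fun y => ∀ l, y ≠ s l) (rk i0)
      (by obtain ⟨y, hy⟩ := hT; exact ⟨y, by simpa using hy⟩)
    simp only [Finset.mem_filter, Finset.mem_univ, true_and] at hx hxmax
    have hxD0 : x ∉ D0 := by
      intro h
      obtain ⟨l, -, hl⟩ := Finset.mem_image.1 h
      exact hx l hl.symm
    have hxs : ∀ i, ¬ rk i x ≤ rk i (s i) := fun i h =>
      hx i (hrk i (le_antisymm h (hs0 i x)))
    rw [Finset.card_eq_one]
    refine ⟨insert x D0, ?_⟩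
    ext B
    rw [Finset.mem_filter, hmemR D0 hD0E, Finset.mem_singleton]
    constructor
    · rintro ⟨z, hz, hzd, rfl⟩
      obtain ⟨i, hi⟩ := hzd x
      have hii0 : i = i0 := by
        by_contra h
        exact hxs i (hi _ (Finset.mem_insert_of_mem
          (Finset.mem_image_of_mem s (by simp [h]))))
      subst hii0
      have hzl : ∀ l, z ≠ s l := by
        rintro l rfl
        by_cases h : l = i
        · subst h
          exact hxs l (hi _ (Finset.mem_insert_self _ _))
        · exact hz (Finset.mem_image_of_mem s (by simp [h]))
      rw [hrk i (le_antisymm (hxmax z hzl) (hi z (Finset.mem_insert_self _ _)))]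
    · rintro rfl
      refine ⟨x, hxD0, fun y => ?_, rfl⟩
      by_cases hy : ∃ l, y = s l
      · obtain ⟨l, rfl⟩ := hy
        exact ⟨l, fun x _ => hs0 l x⟩
      · push Not at hy
        refine ⟨i0, fun z hz => ?_⟩
        rcases Finset.mem_insert.1 hz with rfl | hz
        · exact hxmax y hy
        obtain ⟨l, hl, rfl⟩ := Finset.mem_image.1 hz
        exact (hs y hy i0 l (Finset.ne_of_mem_erase hl).symm).le
  have hcount := Finset.sum_card_bipartiteAbove_eq_sum_card_bipartiteBelow
    (s := E) (t := R) (fun D B => D ⊆ B)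
  simp only [Finset.bipartiteAbove, Finset.bipartiteBelow] at hcount
  rw [Finset.sum_congr rfl hroom, ← Finset.add_sum_erase E _ hD0E, hdoor0,
    Finset.sum_congr rfl (fun D hD => hdoor D (Finset.mem_of_mem_erase hD)
      (Finset.ne_of_mem_erase hD))] at hcount
  simp only [Finset.sum_const, smul_eq_mul] at hcount
  omega
end Scarf
section Brouwer

theorem brouwer_step {I : Type*} [Fintype I] [DecidableEq I] [Nonempty I] (m : ℕ)
    (c : (I → ℕ) → I) :
    ∃ (C : Finset I) (a : I → (I → ℕ)), C.Nonempty ∧ (∀ i ∈ C, c (a i) = i) ∧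
      (∀ i ∈ C, ∑ j, a i j = m) ∧
      (∀ i ∈ C, ∀ j, j ∉ C → a i j ≤ Fintype.card I) ∧
      (∀ i ∈ C, ∀ i' ∈ C, ∀ j ∈ C, a i j ≤ a i' j + Fintype.card I) := by
  classical
  let Tm := {k : I → Fin (m+1) // ∑ i, (k i : ℕ) = m}
  let N := Fintype.card Tm
  let e : Tm ≃ Fin N := Fintype.equivFin Tm
  let eI : I ≃ Fin (Fintype.card I) := Fintype.equivFin I
  let rk : I → Tm ⊕ I → ℕ := fun i y => match y with
    | Sum.inl k => 1 + ((k.1 i : ℕ) * N + (e k : ℕ))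
    | Sum.inr j => if j = i then 0 else 1 + ((m+1) * N + (eI j : ℕ))
  have hlt : ∀ i (k : Tm), (k.1 i : ℕ) * N + (e k : ℕ) < (m+1) * N := by
    intro i k
    have h1 : (k.1 i : ℕ) + 1 ≤ m + 1 := (k.1 i).2
    have h2 : (e k : ℕ) < N := (e k).2
    have h3 : ((k.1 i : ℕ) + 1) * N ≤ (m+1) * N := Nat.mul_le_mul_right _ h1
    nlinarith
  have hrk : ∀ i, Function.Injective (rk i) := by
    intro i y y' h
    rcases y with k | j <;> rcases y' with k' | j'
    · simp only [rk] at h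
      have h2 : (e k : ℕ) < N := (e k).2
      have h3 : (e k' : ℕ) < N := (e k').2
      have h4 : (k.1 i : ℕ) * N + (e k : ℕ) = (k'.1 i : ℕ) * N + (e k' : ℕ) := by omega
      have h5 : (e k : ℕ) = e k' := by
        have := congrArg (· % N) h4
        simpa [Nat.mul_add_mod_self_right, Nat.mod_eq_of_lt h2, Nat.mod_eq_of_lt h3] using this
      rw [e.injective (Fin.ext h5)]
    · simp only [rk] at h
      have := hlt i k
      split_ifs at h <;> omega
    · simp only [rk] at h
      have := hlt i k'
      split_ifs at h <;> omega
    · simp only [rk] at h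
      split_ifs at h with h1 h2 h2
      · rw [h1, h2]
      · omega
      · omega
      · rw [eI.injective (Fin.ext (by omega : (eI j : ℕ) = eI j'))]
  have mk : ∀ y : I → ℕ, ∑ i, y i = m → ∃ k : Tm, ∀ i, (k.1 i : ℕ) = y i := by
    intro y hy
    have hle : ∀ i, y i < m + 1 := fun i => by
      have := Finset.single_le_sum (f := y) (fun _ _ => Nat.zero_le _) (Finset.mem_univ i)
      omega
    exact ⟨⟨fun i => ⟨y i, hle i⟩, by simpa using hy⟩, fun i => rfl⟩
  have i0 : I := Classical.arbitrary I
  obtain ⟨k0, hk0⟩ := mk (fun i => if i = i0 then m else 0) (by simp)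
  obtain ⟨B, hB, hBc⟩ := scarf rk hrk Sum.inr
    (fun y => match y with
      | Sum.inl k => c (fun i => (k.1 i : ℕ))
      | Sum.inr j => j) (fun i => rfl)
    (by intro i y; simp [rk])
    (by
      intro x hx i j hij
      rcases x with k | l
      · have := hlt i k
        simp only [rk, if_neg hij.symm]; omega
      · exact absurd rfl (hx l))
    ⟨Sum.inl k0, fun l => by simp⟩
  let C : Finset I := Finset.univ.filter fun i => Sum.inr i ∉ B
  have hdom : ∀ y : Tm, ∃ i ∈ C, ∀ k : Tm, Sum.inl k ∈ B → (y.1 i : ℕ) ≤ k.1 i := by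
    intro y
    obtain ⟨i, hi⟩ := hB (Sum.inl y)
    refine ⟨i, ?_, fun k hk => ?_⟩
    · simp only [C, Finset.mem_filter, Finset.mem_univ, true_and]
      intro h
      have := hi _ h
      simp [rk] at this
    · have := hi _ hk
      simp only [rk] at this
      have h2 : (e k : ℕ) < N := (e k).2
      by_contra hcon
      push Not at hcon
      have h3 : ((k.1 i : ℕ) + 1) * N ≤ (y.1 i : ℕ) * N := Nat.mul_le_mul_right _ hcon
      nlinarith
  have ha : ∀ i, ∃ k : Tm, i ∈ C → Sum.inl k ∈ B ∧ c (fun j => (k.1 j : ℕ)) = i := by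
    intro i
    by_cases hi : i ∈ C
    · obtain ⟨b, hb, hcb⟩ := hBc i
      rcases b with k | j
      · exact ⟨k, fun _ => ⟨hb, hcb⟩⟩
      · simp only [C, Finset.mem_filter, Finset.mem_univ, true_and] at hi
        simp only at hcb
        subst hcb
        exact absurd hb hi
    · exact ⟨k0, fun h => absurd h hi⟩
  choose a ha using ha
  obtain ⟨i1, hi1, -⟩ := hdom k0
  have hAne : (Finset.univ.filter fun k : Tm => Sum.inl k ∈ B).Nonempty :=
    ⟨a i1, by simpa using (ha i1 hi1).1⟩
  have hmin : ∀ i, ∃ k : Tm, Sum.inl k ∈ B ∧ ∀ k' : Tm, Sum.inl k' ∈ B →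
      (k.1 i : ℕ) ≤ k'.1 i := by
    intro i
    obtain ⟨k, hk, hk'⟩ := Finset.exists_min_image _ (fun k : Tm => (k.1 i : ℕ)) hAne
    exact ⟨k, by simpa using hk, fun k' h => hk' k' (by simpa using h)⟩
  choose μ hμB hμ using hmin
  have hsum : m < ∑ i ∈ C, (((μ i).1 i : ℕ) + 1) := by
    by_contra hcon
    push Not at hcon
    obtain ⟨y, hy⟩ := mk (fun i => (if i ∈ C then ((μ i).1 i : ℕ) + 1 else 0) +
      (if i = i1 then m - ∑ i ∈ C, (((μ i).1 i : ℕ) + 1) else 0)) (by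
        rw [Finset.sum_add_distrib]
        simp only [Finset.sum_ite_mem, Finset.univ_inter, Finset.sum_ite_eq', Finset.mem_univ,
          if_true]
        omega)
    obtain ⟨i, hi, h⟩ := hdom y
    have := h _ (hμB i)
    rw [hy i, if_pos hi] at this
    omega
  rw [Finset.sum_add_distrib] at hsum
  have hCc : ∑ i ∈ C, 1 ≤ Fintype.card I := by simpa using Finset.card_le_univ C
  have hsplit : ∀ k : Tm, ∑ i ∈ C, (k.1 i : ℕ) + ∑ i ∈ Cᶜ, (k.1 i : ℕ) = m := fun k => by
    rw [Finset.sum_add_sum_compl]; exact k.2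
  have hge : ∀ k : Tm, Sum.inl k ∈ B → ∑ i ∈ C, ((μ i).1 i : ℕ) ≤ ∑ i ∈ C, (k.1 i : ℕ) :=
    fun k hk => Finset.sum_le_sum fun i _ => hμ i k hk
  refine ⟨C, fun i j => ((a i).1 j : ℕ), ⟨i1, hi1⟩, fun i hi => (ha i hi).2,
    fun i _ => (a i).2, ?_, ?_⟩
  · intro i hi j hj
    have h1 := hge _ (ha i hi).1
    have h2 := hsplit (a i)
    have h3 := Finset.single_le_sum (f := fun j => ((a i).1 j : ℕ)) (s := Cᶜ)
      (fun _ _ => Nat.zero_le _) (by simpa using hj : j ∈ Cᶜ)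
    show ((a i).1 j : ℕ) ≤ _
    omega
  · intro i hi i' hi' j hj
    have h2 := hsplit (a i)
    have h4 := hμ j _ (ha i' hi').1
    have h5 : ∑ l ∈ C.erase j, ((μ l).1 l : ℕ) ≤ ∑ l ∈ C.erase j, ((a i).1 l : ℕ) :=
      Finset.sum_le_sum fun l _ => hμ l _ (ha i hi).1
    have h6 := Finset.add_sum_erase C (fun l => ((μ l).1 l : ℕ)) hj
    have h7 := Finset.add_sum_erase C (fun l => ((a i).1 l : ℕ)) hj
    show ((a i).1 j : ℕ) ≤ ((a i').1 j : ℕ) + _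
    omega

theorem brouwer {I : Type*} [Fintype I] [Nonempty I] (f : (I → ℝ) → (I → ℝ))
    (hf : ContinuousOn f (stdSimplex ℝ I)) (hmaps : ∀ p ∈ stdSimplex ℝ I, f p ∈ stdSimplex ℝ I) :
    ∃ p ∈ stdSimplex ℝ I, f p = p := by
  classical
  set n : ℝ := (Fintype.card I : ℝ) with hn
  have hstep : ∀ k : ℕ, ∃ p ∈ stdSimplex ℝ I, ∀ i, ∃ q ∈ stdSimplex ℝ I,
      (∀ j, |q j - p j| ≤ n / (k+1 : ℕ)) ∧ q i - n / (k+1 : ℕ) ≤ f q i := by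
    intro k
    set m : ℕ := k + 1 with hm
    have hm0 : (0:ℝ) < (m : ℝ) := by positivity
    let pt : (I → ℕ) → (I → ℝ) := fun a i => (a i : ℝ) / m
    have hpt : ∀ a : I → ℕ, ∑ i, a i = m → pt a ∈ stdSimplex ℝ I := by
      intro a ha
      refine ⟨fun i => by positivity, ?_⟩
      simp only [pt]
      rw [← Finset.sum_div, ← Nat.cast_sum, ha]
      field_simp
    have hc : ∀ a : I → ℕ, ∃ i, ∑ i, a i = m → pt a i ≤ f (pt a) i := by
      intro a
      by_cases ha : ∑ i, a i = m
      · by_contra hcon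
        push Not at hcon
        have h1 := (hmaps _ (hpt a ha)).2
        have h2 := (hpt a ha).2
        have : ∑ i, f (pt a) i < ∑ i, pt a i :=
          Finset.sum_lt_sum_of_nonempty Finset.univ_nonempty fun i _ => (hcon i).2
        linarith
      · exact ⟨Classical.arbitrary I, fun h => absurd h ha⟩
    choose c hc using hc
    obtain ⟨C, a, ⟨i1, hi1⟩, hac, hasum, h1, h2⟩ := brouwer_step m c
    refine ⟨pt (a i1), hpt _ (hasum i1 hi1), fun i => ?_⟩
    by_cases hi : i ∈ C
    · refine ⟨pt (a i), hpt _ (hasum i hi), fun j => ?_, ?_⟩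
      · simp only [pt]
        rw [← sub_div, abs_div, abs_of_pos hm0]
        apply div_le_div_of_nonneg_right _ hm0.le
        by_cases hj : j ∈ C
        · have e1 : (a i j : ℝ) ≤ a i1 j + n := by rw [hn]; exact_mod_cast h2 i hi i1 hi1 j hj
          have e2 : (a i1 j : ℝ) ≤ a i j + n := by rw [hn]; exact_mod_cast h2 i1 hi1 i hi j hj
          rw [abs_le]; constructor <;> linarith
        · have e1 : (a i j : ℝ) ≤ n := by rw [hn]; exact_mod_cast h1 i hi j hj
          have e2 : (a i1 j : ℝ) ≤ n := by rw [hn]; exact_mod_cast h1 i1 hi1 j hj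
          have e3 : (0:ℝ) ≤ a i j := by positivity
          have e4 : (0:ℝ) ≤ a i1 j := by positivity
          rw [abs_le]; constructor <;> linarith
      · have := hc (a i) (hasum i hi)
        rw [hac i hi] at this
        have h0 : 0 ≤ n / m := by positivity
        linarith
    · refine ⟨pt (a i1), hpt _ (hasum i1 hi1), fun j => ?_, ?_⟩
      · rw [sub_self, abs_zero]; positivity
      · have e1 : (a i1 i : ℝ) ≤ n := by rw [hn]; exact_mod_cast h1 i1 hi1 i hi
        have e2 : pt (a i1) i ≤ n / m := div_le_div_of_nonneg_right e1 hm0.le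
        have e3 := (hmaps _ (hpt _ (hasum i1 hi1))).1 i
        linarith
  choose p hp q hq hqp hqf using hstep
  obtain ⟨p0, hp0, φ, hφ, hlim⟩ := (isCompact_stdSimplex ℝ I).tendsto_subseq hp
  have hnm : Filter.Tendsto (fun k : ℕ => n / ((φ k + 1 : ℕ) : ℝ)) Filter.atTop (nhds 0) := by
    apply Filter.Tendsto.div_atTop tendsto_const_nhds
    exact tendsto_natCast_atTop_atTop.comp
      ((Filter.tendsto_add_atTop_nat 1).comp hφ.tendsto_atTop)
  have hge : ∀ i, p0 i ≤ f p0 i := by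
    intro i
    have hql : Filter.Tendsto (fun k => q (φ k) i) Filter.atTop (nhds p0) := by
      rw [tendsto_pi_nhds]
      intro j
      have h1 : Filter.Tendsto (fun k => p (φ k) j) Filter.atTop (nhds (p0 j)) :=
        (tendsto_pi_nhds.1 hlim) j
      have h2 : Filter.Tendsto (fun k => q (φ k) i j - p (φ k) j) Filter.atTop (nhds 0) :=
        squeeze_zero_norm (fun k => by simpa using hqp (φ k) i j) hnm
      simpa using h2.add h1
    have hfl : Filter.Tendsto (fun k => f (q (φ k) i)) Filter.atTop (nhds (f p0)) :=
      (hf p0 hp0).tendsto.comp (tendsto_nhdsWithin_iff.2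
        ⟨hql, Filter.Eventually.of_forall fun k => hq _ _⟩)
    have h3 := ((tendsto_pi_nhds.1 hql) i).sub hnm
    rw [sub_zero] at h3
    exact le_of_tendsto_of_tendsto' h3 ((tendsto_pi_nhds.1 hfl) i) fun k => hqf (φ k) i
  refine ⟨p0, hp0, ?_⟩
  have hs : ∑ i, p0 i = ∑ i, f p0 i := by rw [hp0.2, (hmaps p0 hp0).2]
  have := (Finset.sum_eq_sum_iff_of_le (fun i _ => hge i)).1 hs
  funext i
  exact (this i (Finset.mem_univ i)).symm

end Brouwer

section Approx

theorem approx_kakutani {E : Type*} [NormedAddCommGroup E] [NormedSpace ℝ E] (K : Set E)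
    (hK : IsCompact K) (z : E → E)
    (hz : ∀ (F : Finset E) (s : E → ℝ), (∀ e ∈ F, 0 ≤ s e) → ∑ e ∈ F, s e = 1 →
      ∑ e ∈ F, s e • z e ∈ K) (ε : ℝ) (hε : 0 < ε) :
    ∃ (F : Finset E) (s : E → ℝ), (∀ e ∈ F, 0 ≤ s e) ∧ ∑ e ∈ F, s e = 1 ∧
      ∀ e ∈ F, 0 < s e → ‖e - ∑ e ∈ F, s e • z e‖ < ε := by
  classical
  obtain ⟨t, -, htf, htK⟩ := Metric.totallyBounded_iff.1 hK.totallyBounded ε hε |>.imp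
    (fun t h => (⟨trivial, h.1, h.2⟩ : True ∧ t.Finite ∧ K ⊆ ⋃ y ∈ t, Metric.ball y ε))
  set F : Finset E := htf.toFinset with hF
  have hcov : ∀ x ∈ K, ∃ e ∈ F, ‖e - x‖ < ε := by
    intro x hx
    obtain ⟨e, he, hxe⟩ := Set.mem_iUnion₂.1 (htK hx)
    refine ⟨e, by simpa [hF] using he, ?_⟩
    rw [← dist_eq_norm, dist_comm]; exact hxe
  have hKne : K.Nonempty := ⟨_, hz {0} (fun _ => 1) (by simp) (by simp)⟩
  obtain ⟨x1, hx1⟩ := hKne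
  obtain ⟨e1, he1, -⟩ := hcov x1 hx1
  have : Nonempty F := ⟨⟨e1, he1⟩⟩
  let Y : (F → ℝ) → E := fun p => ∑ e : F, p e • z e
  let w : E → F → ℝ := fun x e => max 0 (ε - ‖(e:E) - x‖)
  have hw0 : ∀ x e, 0 ≤ w x e := fun x e => le_max_left _ _
  have hYK : ∀ p ∈ stdSimplex ℝ F, Y p ∈ K := by
    intro p hp
    have := hz F (fun e => if h : e ∈ F then p ⟨e, h⟩ else 0)
      (fun e he => by simp only [he, dif_pos]; exact hp.1 _)
      (by rw [← Finset.sum_coe_sort]; simpa using hp.2)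
    rw [← Finset.sum_coe_sort] at this
    simpa [Y] using this
  have hwpos : ∀ x ∈ K, 0 < ∑ e, w x e := by
    intro x hx
    obtain ⟨e, he, hlt⟩ := hcov x hx
    apply Finset.sum_pos' (fun e _ => hw0 x e)
    exact ⟨⟨e, he⟩, Finset.mem_univ _, lt_max_of_lt_right (by simpa using hlt)⟩
  have hYc : Continuous Y := by fun_prop
  have hwc : ∀ e, Continuous fun x => w x e := fun e => by fun_prop
  obtain ⟨p, hp, hfix⟩ := brouwer (fun p e => w (Y p) e / ∑ e', w (Y p) e')
    (by
      rw [continuousOn_pi]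
      intro e
      apply ContinuousOn.div
      · exact ((hwc e).comp hYc).continuousOn
      · exact (continuous_finsetSum _ fun e _ => (hwc e).comp hYc).continuousOn
      · intro p hp
        exact (hwpos _ (hYK p hp)).ne')
    (by
      intro p hp
      refine ⟨fun e => div_nonneg (hw0 _ _) (hwpos _ (hYK p hp)).le, ?_⟩
      rw [← Finset.sum_div]
      exact div_self (hwpos _ (hYK p hp)).ne')
  have hYp : ∑ e ∈ F, (if h : e ∈ F then p ⟨e, h⟩ else 0) • z e = Y p := by
    rw [← Finset.sum_coe_sort]; simp [Y]
  refine ⟨F, (fun e => if h : e ∈ F then p ⟨e, h⟩ else 0),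
      (fun e he => by simp only [he, dif_pos]; exact hp.1 _),
      (by rw [← Finset.sum_coe_sort]; simpa using hp.2), ?_⟩
  rw [hYp]
  intro e he hpos
  simp only [he, dif_pos] at hpos
  rw [← hfix] at hpos
  have : 0 < w (Y p) ⟨e, he⟩ := by
    by_contra hcon
    have h0 : w (Y p) ⟨e, he⟩ = 0 := le_antisymm (not_lt.1 hcon) (hw0 _ _)
    simp [h0] at hpos
  rcases lt_max_iff.1 this with h | h
  · exact absurd h (lt_irrefl _)
  · linarith

theorem weak_limit {Ω : Type*} [MeasurableSpace Ω] (ρ : Measure Ω) [IsFiniteMeasure ρ]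
    (𝓕 : Ultrafilter ℕ) (f : ℕ → Ω → ℝ) (hf : ∀ n, Measurable (f n))
    (h01 : ∀ n β, f n β ∈ Set.Icc (0:ℝ) 1) :
    ∃ g : Ω → ℝ, Measurable g ∧ (∀ β, g β ∈ Set.Icc (0:ℝ) 1) ∧
      ∀ φ : Ω → ℝ, Measurable φ → (∃ C, ∀ β, |φ β| ≤ C) →
        Tendsto (fun n => ∫ β, φ β * f n β ∂ρ) 𝓕 (nhds (∫ β, φ β * g β ∂ρ)) := by
  have hmem : ∀ φ : Ω → ℝ, Measurable φ → (∃ C, ∀ β, |φ β| ≤ C) → MemLp φ 2 ρ := by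
    rintro φ hφ ⟨C, hC⟩
    exact MemLp.of_bound hφ.aestronglyMeasurable C (Filter.Eventually.of_forall hC)
  have hfb : ∀ n, ∀ β, |f n β| ≤ 1 := fun n β => by
    rw [abs_le]; constructor <;> linarith [(h01 n β).1, (h01 n β).2]
  have hfm : ∀ n, MemLp (f n) 2 ρ := fun n => hmem _ (hf n) ⟨1, hfb n⟩
  let H := Lp ℝ 2 ρ
  let F : ℕ → H := fun n => (hfm n).toLp (f n)
  obtain ⟨R, hR⟩ : ∃ R : ℝ, ∀ n, ‖F n‖ ≤ R := by
    refine ⟨(ρ.real Set.univ) ^ (2:ENNReal).toReal⁻¹ * 1, fun n => ?_⟩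
    apply Lp.norm_le_of_ae_bound zero_le_one
    filter_upwards [(hfm n).coeFn_toLp] with β hβ
    simpa [F, hβ] using hfb n β
  let Λ : ℕ → WeakDual ℝ H := fun n =>
    StrongDual.toWeakDual (InnerProductSpace.toDual ℝ H (F n))
  have hcomp : IsCompact (WeakDual.toStrongDual ⁻¹' Metric.closedBall (0 : StrongDual ℝ H) R) :=
    WeakDual.isCompact_closedBall (𝕜 := ℝ) (E := H) 0 R
  have hΛ : ∀ n, Λ n ∈ WeakDual.toStrongDual ⁻¹' Metric.closedBall (0 : StrongDual ℝ H) R := by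
    intro n
    simp only [Set.mem_preimage, Metric.mem_closedBall, dist_zero_right]
    have : ‖InnerProductSpace.toDual ℝ H (F n)‖ ≤ R := by
      rw [LinearIsometryEquiv.norm_map]; exact hR n
    exact this
  obtain ⟨L, -, hL⟩ := hcomp.ultrafilter_le_nhds (𝓕.map Λ) (by
    rw [Filter.le_principal_iff]
    exact Filter.mem_map.2 (Filter.univ_mem' hΛ))
  have hL' : Tendsto Λ 𝓕 (nhds L) := hL
  let g0 : H := (InnerProductSpace.toDual ℝ H).symm (WeakDual.toStrongDual L)
  have hconv0 : ∀ φ : Ω → ℝ, Measurable φ → (∃ C, ∀ β, |φ β| ≤ C) →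
        Tendsto (fun n => ∫ β, φ β * f n β ∂ρ) 𝓕 (nhds (∫ β, φ β * g0 β ∂ρ)) := by
    intro φ hφ hb
    have hφm := hmem φ hφ hb
    have h1 := ((WeakDual.eval_continuous (hφm.toLp φ)).tendsto L).comp hL'
    have e1 : ∀ n, Λ n (hφm.toLp φ) = ∫ β, φ β * f n β ∂ρ := by
      intro n
      have : Λ n (hφm.toLp φ) = inner ℝ (F n) (hφm.toLp φ) := rfl
      rw [this, L2.inner_def]
      apply integral_congr_ae
      filter_upwards [(hfm n).coeFn_toLp, hφm.coeFn_toLp] with β h1 h2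
      simp [F, h1, h2]
    have e2 : L (hφm.toLp φ) = ∫ β, φ β * g0 β ∂ρ := by
      have : L (hφm.toLp φ) = inner ℝ g0 (hφm.toLp φ) := by
        simp only [g0]
        rw [InnerProductSpace.toDual_symm_apply]; rfl
      rw [this, L2.inner_def]
      apply integral_congr_ae
      filter_upwards [hφm.coeFn_toLp] with β h2
      simp [h2]
    rw [← e2]
    refine h1.congr fun n => ?_
    exact e1 n
  have hg0i : Integrable g0 ρ := (Lp.memLp g0).integrable (by norm_num)
  have hfi : ∀ n, Integrable (f n) ρ := fun n => (hfm n).integrable (by norm_num)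
  have hset : ∀ s, MeasurableSet s → Tendsto (fun n => ∫ β in s, f n β ∂ρ) 𝓕
      (nhds (∫ β in s, g0 β ∂ρ)) := by
    intro s hs
    have := hconv0 (s.indicator 1) (measurable_one.indicator hs) ⟨1, fun β => by
      by_cases h : β ∈ s <;> simp [h]⟩
    have e : ∀ h : Ω → ℝ, ∫ β, s.indicator 1 β * h β ∂ρ = ∫ β in s, h β ∂ρ := by
      intro h
      rw [← integral_indicator hs]
      congr 1; funext β
      by_cases hb : β ∈ s <;> simp [hb]
    simpa only [e] using this
  have hge : 0 ≤ᵐ[ρ] g0 := by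
    apply ae_nonneg_of_forall_setIntegral_nonneg hg0i
    intro s hs _
    exact ge_of_tendsto' (hset s hs) fun n =>
      setIntegral_nonneg hs fun β _ => (h01 n β).1
  have hle : 0 ≤ᵐ[ρ] fun β => 1 - g0 β := by
    apply ae_nonneg_of_forall_setIntegral_nonneg ((integrable_const 1).sub hg0i)
    intro s hs _
    change 0 ≤ ∫ x in s, ((1:ℝ) - g0 x) ∂ρ
    rw [integral_sub (integrable_const 1).integrableOn hg0i.integrableOn, sub_nonneg]
    refine le_of_tendsto' (hset s hs) fun n => ?_
    exact setIntegral_mono (hfi n).integrableOn (integrable_const 1).integrableOn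
      fun β => (h01 n β).2
  obtain ⟨g1, hg1m, hg1⟩ : ∃ g1 : Ω → ℝ, Measurable g1 ∧ g0 =ᵐ[ρ] g1 :=
    ⟨_, (Lp.stronglyMeasurable g0).measurable, Filter.EventuallyEq.rfl⟩
  refine ⟨fun β => max 0 (min 1 (g1 β)), by fun_prop, fun β => ⟨le_max_left _ _, ?_⟩, ?_⟩
  · exact max_le zero_le_one (min_le_left _ _)
  · intro φ hφ hb
    have := hconv0 φ hφ hb
    have e : ∫ β, φ β * g0 β ∂ρ = ∫ β, φ β * max 0 (min 1 (g1 β)) ∂ρ := by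
      apply integral_congr_ae
      filter_upwards [hg1, hge, hle] with β h1 h2 h3
      have h2' : (0:ℝ) ≤ g0 β := h2
      rw [← h1, min_eq_right (by simpa using h3), max_eq_right h2']
    rwa [← e]
end Approx

section FP

/-- admissible families -/
def Adm {J : Type*} (m : J → ℝ → ℝ) : Prop :=
  ∀ j, Measurable (m j) ∧ ∀ β, m j β ∈ Set.Icc (0:ℝ) 1

theorem compactK {V : Type*} [NormedAddCommGroup V] [ProperSpace V] (C : ℝ) :
    IsCompact {y : C(Set.Icc (0:ℝ) 1, V) | (∀ a, ‖y a‖ ≤ C) ∧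
      ∀ a b, dist (y a) (y b) ≤ C * dist a b} := by
  apply ArzelaAscoli.isCompact_of_equicontinuous
  · have himg : (ContinuousMap.toFun '' {y : C(Set.Icc (0:ℝ) 1, V) | (∀ a, ‖y a‖ ≤ C) ∧
      ∀ a b, dist (y a) (y b) ≤ C * dist a b}) =
      {f : Set.Icc (0:ℝ) 1 → V | (∀ a, ‖f a‖ ≤ C) ∧ ∀ a b, dist (f a) (f b) ≤ C * dist a b} := by
      ext f
      constructor
      · rintro ⟨y, hy, rfl⟩; exact hy
      · intro hf
        have hl : LipschitzWith (Real.toNNReal C) f := by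
          apply LipschitzWith.of_dist_le_mul
          intro a b
          exact (hf.2 a b).trans (mul_le_mul_of_nonneg_right (Real.le_coe_toNNReal C) dist_nonneg)
        exact ⟨⟨f, hl.continuous⟩, hf, rfl⟩
    rw [himg]
    have hpi : IsCompact (Set.pi Set.univ fun _ : Set.Icc (0:ℝ) 1 =>
        Metric.closedBall (0:V) C) :=
      isCompact_univ_pi fun _ => isCompact_closedBall 0 C
    apply hpi.of_isClosed_subset
    · simp only [Set.ofPred_and, Set.ofPred_forall]
      apply IsClosed.inter
      · exact isClosed_iInter fun a => isClosed_le (by fun_prop) (by fun_prop)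
      · exact isClosed_iInter fun a => isClosed_iInter fun b =>
          isClosed_le (by fun_prop) (by fun_prop)
    · intro f hf a _
      simpa using hf.1 a
  · apply UniformEquicontinuous.equicontinuous
    apply LipschitzWith.uniformEquicontinuous _ (Real.toNNReal C)
    intro y
    apply LipschitzWith.of_dist_le_mul
    intro a b
    exact (y.2.2 a b).trans (mul_le_mul_of_nonneg_right (Real.le_coe_toNNReal C) dist_nonneg)

theorem adm_sum {𝒳 𝒰 : Type*} [Fintype 𝒰] {m : ℕ × 𝒳 × 𝒰 → ℝ → ℝ} (hm : Adm m) (t : ℕ) (x : 𝒳) :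
    Measurable (fun β => ∑ u, m (t, x, u) β) ∧
      ∀ β, 0 ≤ ∑ u, m (t, x, u) β ∧ ∑ u, m (t, x, u) β ≤ Fintype.card 𝒰 := by
  refine ⟨Finset.measurable_sum _ fun u _ => (hm _).1, fun β => ⟨?_, ?_⟩⟩
  · exact Finset.sum_nonneg fun u _ => ((hm _).2 β).1
  · calc ∑ u, m (t, x, u) β ≤ ∑ u : 𝒰, (1:ℝ) := Finset.sum_le_sum fun u _ => ((hm _).2 β).2
      _ = _ := by simp

theorem W_meas {W : ℝ → ℝ → ℝ} (hW : IsGraphon W) (α : ℝ) : Measurable (W α) :=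
  hW.1.comp (measurable_const.prodMk measurable_id)

theorem W_int {W : ℝ → ℝ → ℝ} (hW : IsGraphon W) (α : ℝ) {h : ℝ → ℝ} (hh : Measurable h)
    {C : ℝ} (hC : ∀ β, |h β| ≤ C) :
    Integrable (fun β => W α β * h β) (volume.restrict (Set.Ioc (0:ℝ) 1)) := by
  apply Integrable.of_bound ((W_meas hW α).mul hh).aestronglyMeasurable C
  refine Filter.Eventually.of_forall fun β => ?_
  have h1 := hW.2.2 α β
  change ‖W α β * h β‖ ≤ C
  rw [norm_mul, Real.norm_eq_abs, Real.norm_eq_abs, abs_of_nonneg h1.1]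
  nlinarith [abs_nonneg (h β), hC β, h1.1, h1.2]

theorem Zex {𝒳 𝒰 : Type*} [Fintype 𝒳] [Fintype 𝒰] (T : ℕ) {W : ℝ → ℝ → ℝ} (hW : IsGraphon W)
    {LW : ℝ} (hWLip : GraphonLipschitz W LW) {m : ℕ × 𝒳 × 𝒰 → ℝ → ℝ} (hm : Adm m) :
    ∃ y : C(Set.Icc (0:ℝ) 1, Fin T → 𝒳 → ℝ),
      (∀ a t x, y a t x = nbhd W (fun β x => ∑ u, m (t, x, u) β) a x) ∧
      ((∀ a, ‖y a‖ ≤ (1 + |LW|) * Fintype.card 𝒰) ∧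
        ∀ a b, dist (y a) (y b) ≤ (1 + |LW|) * Fintype.card 𝒰 * dist a b) := by
  have hprob : (volume.restrict (Set.Ioc (0:ℝ) 1)).real Set.univ = 1 := by simp
  have hN : (0:ℝ) ≤ Fintype.card 𝒰 := by positivity
  have hb : ∀ (t : ℕ) (x : 𝒳) β, |∑ u, m (t, x, u) β| ≤ Fintype.card 𝒰 := fun t x β => by
    have := (adm_sum hm t x).2 β
    rw [abs_of_nonneg this.1]; exact this.2
  have hlip : ∀ (a b : Set.Icc (0:ℝ) 1) (t : ℕ) (x : 𝒳),
      |nbhd W (fun β x => ∑ u, m (t, x, u) β) a x - nbhd W (fun β x => ∑ u, m (t, x, u) β) b x|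
        ≤ (1 + |LW|) * Fintype.card 𝒰 * dist a b := by
    intro a b t x
    simp only [nbhd]
    rw [← integral_sub (W_int hW _ (adm_sum hm t x).1 (hb t x))
      (W_int hW _ (adm_sum hm t x).1 (hb t x))]
    have := norm_setIntegral_le_of_norm_le_const (μ := volume) (s := Set.Ioc (0:ℝ) 1)
      (f := fun β => W a β * ∑ u, m (t, x, u) β - W b β * ∑ u, m (t, x, u) β)
      (C := |LW| * dist a b * Fintype.card 𝒰) (by simp) (fun β hβ => by
        rw [← sub_mul, norm_mul, Real.norm_eq_abs, Real.norm_eq_abs]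
        have h1 := hWLip a β b β a.2 ⟨hβ.1.le, hβ.2⟩ b.2 ⟨hβ.1.le, hβ.2⟩
        rw [sub_self, abs_zero, add_zero] at h1
        have h2 : LW * |(a:ℝ) - b| ≤ |LW| * |(a:ℝ) - b| :=
          mul_le_mul_of_nonneg_right (le_abs_self _) (abs_nonneg _)
        rw [Subtype.dist_eq, Real.dist_eq]
        exact mul_le_mul (h1.trans h2) (hb t x β) (abs_nonneg _) (by positivity))
    rw [Real.norm_eq_abs] at this
    refine this.trans ?_
    simp only [Measure.real, Real.volume_Ioc]
    have h3 : 0 ≤ dist a b := dist_nonneg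
    simp
    nlinarith [mul_nonneg hN h3]
  have hdist : ∀ a b : Set.Icc (0:ℝ) 1, dist
      (fun (t : Fin T) x => nbhd W (fun β x => ∑ u, m (t, x, u) β) a x)
      (fun (t : Fin T) x => nbhd W (fun β x => ∑ u, m (t, x, u) β) b x)
        ≤ (1 + |LW|) * Fintype.card 𝒰 * dist a b := by
    intro a b
    have h0 : 0 ≤ (1 + |LW|) * Fintype.card 𝒰 * dist a b := by positivity
    rw [dist_pi_le_iff h0]
    intro t
    rw [dist_pi_le_iff h0]
    intro x
    rw [Real.dist_eq]
    exact hlip a b t x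
  refine ⟨⟨fun a t x => nbhd W (fun β x => ∑ u, m (t, x, u) β) a x, ?_⟩, fun _ _ _ => rfl, ?_,
    hdist⟩
  · have hl : LipschitzWith (Real.toNNReal ((1 + |LW|) * Fintype.card 𝒰))
      (fun (a : Set.Icc (0:ℝ) 1) (t : Fin T) x => nbhd W (fun β x => ∑ u, m (t, x, u) β) a x) := by
      apply LipschitzWith.of_dist_le_mul
      intro a b
      exact (hdist a b).trans (mul_le_mul_of_nonneg_right (Real.le_coe_toNNReal _) dist_nonneg)
    exact hl.continuous
  · intro a
    have h0 : 0 ≤ (1 + |LW|) * Fintype.card 𝒰 := by positivity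
    rw [pi_norm_le_iff_of_nonneg h0]
    intro t
    rw [pi_norm_le_iff_of_nonneg h0]
    intro x
    have := norm_setIntegral_le_of_norm_le_const (μ := volume) (s := Set.Ioc (0:ℝ) 1)
      (f := fun β => W a β * ∑ u, m (t, x, u) β)
      (C := Fintype.card 𝒰) (by simp) (fun β hβ => by
        have h1 := hW.2.2 a β
        rw [norm_mul, Real.norm_eq_abs, Real.norm_eq_abs, abs_of_nonneg h1.1]
        nlinarith [abs_nonneg (∑ u, m (t, x, u) β), hb t x β, h1.1, h1.2])
    refine this.trans ?_
    simp [Measure.real, Real.volume_Ioc]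
    nlinarith [abs_nonneg LW]
end FP

section FPmain

theorem nbhd_comb {𝒳 𝒰 ι : Type*} [Fintype 𝒳] [Fintype 𝒰] {W : ℝ → ℝ → ℝ} (hW : IsGraphon W)
    (mg : ι → ℕ × 𝒳 × 𝒰 → ℝ → ℝ) (hmg : ∀ y, Adm (mg y)) (F : Finset ι) (s : ι → ℝ)
    (t : ℕ) (a : ℝ) (x : 𝒳) :
    nbhd W (fun β x => ∑ u, ∑ e ∈ F, s e * mg e (t, x, u) β) a x =
      ∑ e ∈ F, s e * nbhd W (fun β x => ∑ u, mg e (t, x, u) β) a x := by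
  have hb : ∀ e β, |∑ u, mg e (t, x, u) β| ≤ Fintype.card 𝒰 := fun e β => by
    have := (adm_sum (hmg e) t x).2 β
    rw [abs_of_nonneg this.1]; exact this.2
  simp only [nbhd]
  simp_rw [← integral_const_mul]
  rw [← integral_finsetSum]
  · congr 1
    ext β
    rw [Finset.sum_comm, Finset.mul_sum]
    refine Finset.sum_congr rfl fun e _ => ?_
    rw [← Finset.mul_sum]; ring
  · intro e _
    exact (W_int hW a (adm_sum (hmg e) t x).1 (hb e)).const_mul _

theorem adm_comb {J ι : Type*} (mg : ι → J → ℝ → ℝ) (hmg : ∀ y, Adm (mg y)) (F : Finset ι)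
    (s : ι → ℝ) (hs : ∀ e ∈ F, 0 ≤ s e) (hs1 : ∑ e ∈ F, s e = 1) :
    Adm (fun j β => ∑ e ∈ F, s e * mg e j β) := by
  intro j
  refine ⟨Finset.measurable_sum _ fun e _ => ((hmg e) j).1.const_mul _, fun β => ⟨?_, ?_⟩⟩
  · exact Finset.sum_nonneg fun e he => mul_nonneg (hs e he) (((hmg e) j).2 β).1
  · rw [← hs1]
    exact Finset.sum_le_sum fun e he => mul_le_of_le_one_right (hs e he) (((hmg e) j).2 β).2

theorem fp_main {𝒳 𝒰 : Type*} [Fintype 𝒳] [Fintype 𝒰] (T : ℕ) {W : ℝ → ℝ → ℝ} (hW : IsGraphon W)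
    {LW : ℝ} (hWLip : GraphonLipschitz W LW)
    (mg : C(Set.Icc (0:ℝ) 1, Fin T → 𝒳 → ℝ) → ℕ × 𝒳 × 𝒰 → ℝ → ℝ) (hmg : ∀ y, Adm (mg y)) :
    ∃ (m : ℕ × 𝒳 × 𝒰 → ℝ → ℝ) (Y : C(Set.Icc (0:ℝ) 1, Fin T → 𝒳 → ℝ)), Adm m ∧
      (∀ a t x, Y a t x = nbhd W (fun β x => ∑ u, m (t, x, u) β) a x) ∧
      ∀ (S : Finset (ℕ × 𝒳 × 𝒰)) (c : ℕ × 𝒳 × 𝒰 → (Fin T → 𝒳 → ℝ) → ℝ)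
        (d : (Fin T → 𝒳 → ℝ) → ℝ), (∀ j, Continuous (c j)) → Continuous d →
        (∀ (y : C(Set.Icc (0:ℝ) 1, Fin T → 𝒳 → ℝ)) (β : ℝ),
          0 ≤ ∑ j ∈ S, c j (y (Set.projIcc 0 1 zero_le_one β)) * mg y j β
            + d (y (Set.projIcc 0 1 zero_le_one β))) →
        ∀ᵐ β ∂(volume.restrict (Set.Ioc (0:ℝ) 1)),
          0 ≤ ∑ j ∈ S, c j (Y (Set.projIcc 0 1 zero_le_one β)) * m j β
            + d (Y (Set.projIcc 0 1 zero_le_one β)) := by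
  classical
  set ρ := (volume.restrict (Set.Ioc (0:ℝ) 1)) with hρ
  have hprob : ρ.real Set.univ = 1 := by simp [hρ]
  choose z hz1 hz2 using fun y => Zex T hW hWLip (hmg y)
  set K := {y : C(Set.Icc (0:ℝ) 1, Fin T → 𝒳 → ℝ) | (∀ a, ‖y a‖ ≤ (1 + |LW|) * Fintype.card 𝒰) ∧
      ∀ a b, dist (y a) (y b) ≤ (1 + |LW|) * Fintype.card 𝒰 * dist a b} with hKdef
  have hK : IsCompact K := compactK _
  have hcombval : ∀ (F : Finset C(Set.Icc (0:ℝ) 1, Fin T → 𝒳 → ℝ)) (s : _ → ℝ) a t x,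
      (∑ e ∈ F, s e • z e) a t x =
        nbhd W (fun β x => ∑ u, ∑ e ∈ F, s e * mg e (t, x, u) β) a x := by
    intro F s a t x
    rw [nbhd_comb hW mg hmg]
    simp [ContinuousMap.sum_apply, Finset.sum_apply, hz1]
  have hcombK : ∀ (F : Finset C(Set.Icc (0:ℝ) 1, Fin T → 𝒳 → ℝ)) (s : _ → ℝ),
      (∀ e ∈ F, 0 ≤ s e) → ∑ e ∈ F, s e = 1 → ∑ e ∈ F, s e • z e ∈ K := by
    intro F s hs hs1
    obtain ⟨y, hy1, hy2⟩ := Zex T hW hWLip (adm_comb mg hmg F s hs hs1)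
    have : ∑ e ∈ F, s e • z e = y := by
      ext a t x
      rw [hcombval, hy1]
    rw [this]; exact hy2
  have hpos : ∀ n : ℕ, (0:ℝ) < 1 / ((n:ℝ) + 1) := fun n => by positivity
  choose F s hs0 hs1 hclose using fun n : ℕ => approx_kakutani K hK z hcombK (1 / ((n:ℝ) + 1)) (hpos n)
  set mn : ℕ → ℕ × 𝒳 × 𝒰 → ℝ → ℝ := fun n j β => ∑ e ∈ F n, s n e * mg e j β with hmn
  set yn : ℕ → C(Set.Icc (0:ℝ) 1, Fin T → 𝒳 → ℝ) := fun n => ∑ e ∈ F n, s n e • z e with hyn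
  have hadm : ∀ n, Adm (mn n) := fun n => adm_comb mg hmg _ _ (hs0 n) (hs1 n)
  let 𝓕 : Ultrafilter ℕ := hyperfilter ℕ
  choose m hmm hm01 hmlim using fun j => weak_limit ρ 𝓕 (fun n => mn n j) (fun n => (hadm n j).1)
    (fun n => (hadm n j).2)
  obtain ⟨Y, hYK, hY⟩ := hK.ultrafilter_le_nhds (𝓕.map yn) (by
    rw [le_principal_iff]
    exact Filter.Eventually.of_forall (f := (𝓕 : Filter ℕ)) (fun n => hcombK _ _ (hs0 n) (hs1 n)))
  have hYt : Tendsto yn 𝓕 (nhds Y) := hY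
  have hmadm : Adm m := fun j => ⟨hmm j, hm01 j⟩
  refine ⟨m, Y, hmadm, ?_, ?_⟩
  · intro a t x
    have h1 : Tendsto (fun n => yn n a t x) 𝓕 (nhds (Y a t x)) := by
      have hc : Continuous fun y : C(Set.Icc (0:ℝ) 1, Fin T → 𝒳 → ℝ) => y a t x :=
        (continuous_apply x).comp ((continuous_apply t).comp (continuous_eval_const a))
      exact (hc.tendsto Y).comp hYt
    have hi : ∀ (q : ℕ × 𝒳 × 𝒰 → ℝ → ℝ), Adm q →
        nbhd W (fun β x => ∑ u, q (t, x, u) β) a x = ∑ u, ∫ β, W a β * q (t, x, u) β ∂ρ := by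
      intro q hq
      simp only [nbhd, Finset.mul_sum]
      rw [integral_finsetSum]
      intro u _
      exact W_int hW _ (hq _).1 (C := 1) (fun β => by
        rw [abs_of_nonneg ((hq _).2 β).1]; exact ((hq _).2 β).2)
    have h2 : Tendsto (fun n => yn n a t x) 𝓕 (nhds (nbhd W (fun β x => ∑ u, m (t, x, u) β) a x)) := by
      rw [hi m hmadm]
      have : (fun n => yn n a t x) = fun n => ∑ u, ∫ β, W a β * mn n (t, x, u) β ∂ρ := by
        ext n
        rw [← hi _ (hadm n)]
        exact hcombval _ _ _ _ _
      rw [this]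
      apply tendsto_finsetSum
      intro u _
      apply hmlim
      · exact W_meas hW _
      · exact ⟨1, fun β => by
          rw [abs_of_nonneg (hW.2.2 _ β).1]; exact (hW.2.2 _ β).2⟩
    exact tendsto_nhds_unique h1 h2
  · intro S c d hc hd hineq
    set pc : ℝ → Set.Icc (0:ℝ) 1 := Set.projIcc 0 1 zero_le_one with hpc
    have hpcc : Continuous pc := continuous_projIcc
    have hcm : ∀ j, Continuous fun β => c j (Y (pc β)) := fun j =>
      (hc j).comp (Y.continuous.comp hpcc)
    have hdm : Continuous fun β => d (Y (pc β)) := hd.comp (Y.continuous.comp hpcc)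
    have hbd : ∀ f : (Fin T → 𝒳 → ℝ) → ℝ, Continuous f → ∃ C, ∀ β, |f (Y (pc β))| ≤ C := by
      intro f hf
      obtain ⟨C, hC⟩ := (isCompact_range (hf.comp Y.continuous)).isBounded.exists_norm_le
      exact ⟨C, fun β => hC _ ⟨pc β, rfl⟩⟩
    -- uniform approximate inequality
    have happrox : ∀ η > 0, ∀ᶠ n in (𝓕 : Filter ℕ), ∀ β,
        0 ≤ ∑ j ∈ S, c j (Y (pc β)) * mn n j β + d (Y (pc β)) + η * (S.card + 1) := by
      intro η hη
      have hev : ∀ f : (Fin T → 𝒳 → ℝ) → ℝ, Continuous f →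
          ∀ᶠ y in nhds Y, ∀ a, |f (y a) - f (Y a)| ≤ η := by
        intro f hf
        have := ((ContinuousMap.continuous_postcomp (X := Set.Icc (0:ℝ) 1)
          (⟨f, hf⟩ : C((Fin T → 𝒳 → ℝ), ℝ))).tendsto Y)
        have := Metric.tendsto_nhds.1 this η hη
        filter_upwards [this] with y hy a
        have h := (ContinuousMap.dist_apply_le_dist a).trans hy.le
        rw [Real.dist_eq] at h
        exact h
      have hall : ∀ᶠ y in nhds Y, (∀ j ∈ S, ∀ a, |c j (y a) - c j (Y a)| ≤ η) ∧
          ∀ a, |d (y a) - d (Y a)| ≤ η := by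
        refine Filter.Eventually.and ?_ (hev d hd)
        rw [Filter.eventually_all_finset]
        intro j _
        exact hev _ (hc j)
      obtain ⟨δ, hδ, hball⟩ := Metric.eventually_nhds_iff.1 hall
      have e1 : ∀ᶠ n in (𝓕 : Filter ℕ), dist (yn n) Y < δ / 2 :=
        Metric.tendsto_nhds.1 hYt (δ / 2) (by positivity)
      have e2 : ∀ᶠ n : ℕ in (𝓕 : Filter ℕ), 1 / ((n:ℝ) + 1) < δ / 2 := by
        have : Tendsto (fun n : ℕ => 1 / ((n:ℝ) + 1)) atTop (nhds 0) :=
          tendsto_one_div_add_atTop_nhds_zero_nat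
        have h := this.eventually (gt_mem_nhds (show (0:ℝ) < δ / 2 by positivity))
        exact (Nat.hyperfilter_le_atTop) h
      filter_upwards [e1, e2] with n h1 h2 β
      have key : ∀ e ∈ F n, 0 ≤ s n e * (∑ j ∈ S, c j (Y (pc β)) * mg e j β + d (Y (pc β))
          + η * (S.card + 1)) := by
        intro e he
        rcases (hs0 n e he).eq_or_lt with h0 | h0
        · rw [← h0]; simp
        apply mul_nonneg h0.le
        have hd1 : dist e Y < δ := by
          have ha := hclose n e he h0
          rw [← dist_eq_norm] at ha
          have hb : dist e (yn n) < δ / 2 := ha.trans h2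
          linarith [dist_triangle e (yn n) Y]
        obtain ⟨hj, hdd⟩ := hball hd1
        have hin := hineq e β
        have hs : ∑ j ∈ S, c j (e (pc β)) * mg e j β ≤
            ∑ j ∈ S, (c j (Y (pc β)) * mg e j β + η) := by
          refine Finset.sum_le_sum fun j hjS => ?_
          have h3 := abs_le.1 (hj j hjS (pc β))
          have h4 := (hmg e j).2 β
          nlinarith [h4.1, h4.2, h3.2]
        rw [Finset.sum_add_distrib, Finset.sum_const, nsmul_eq_mul] at hs
        have h5 := (abs_le.1 (hdd (pc β))).2
        linarith
      have hsum := Finset.sum_nonneg key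
      have : ∑ e ∈ F n, s n e * (∑ j ∈ S, c j (Y (pc β)) * mg e j β + d (Y (pc β))
          + η * (S.card + 1)) = ∑ j ∈ S, c j (Y (pc β)) * mn n j β + d (Y (pc β))
          + η * (S.card + 1) := by
        simp_rw [mul_add, Finset.sum_add_distrib, ← Finset.sum_mul, hs1, one_mul]
        congr 2
        simp_rw [hmn, Finset.mul_sum]
        rw [Finset.sum_comm]
        refine Finset.sum_congr rfl fun j _ => Finset.sum_congr rfl fun e _ => by ring
      linarith
    have hmint : ∀ (q : ℝ → ℝ) (φ : ℝ → ℝ), Measurable q → (∀ β, q β ∈ Set.Icc (0:ℝ) 1) →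
        Measurable φ → (∃ C, ∀ β, |φ β| ≤ C) → Integrable (fun β => φ β * q β) ρ := by
      rintro q φ hq hq1 hφ ⟨C, hC⟩
      apply Integrable.of_bound (hφ.mul hq).aestronglyMeasurable C
      refine Filter.Eventually.of_forall fun β => ?_
      change ‖φ β * q β‖ ≤ C
      rw [norm_mul, Real.norm_eq_abs, Real.norm_eq_abs, abs_of_nonneg (hq1 β).1]
      nlinarith [abs_nonneg (φ β), hC β, (hq1 β).1, (hq1 β).2]
    have hIntm : Integrable (fun β => ∑ j ∈ S, c j (Y (pc β)) * m j β + d (Y (pc β))) ρ := by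
      apply Integrable.add
      · apply integrable_finsetSum
        intro j _
        exact hmint _ _ (hmm j) (hm01 j) (hcm j).measurable (hbd _ (hc j))
      · obtain ⟨C, hC⟩ := hbd d hd
        exact Integrable.of_bound hdm.measurable.aestronglyMeasurable C
          (Filter.Eventually.of_forall hC)
    apply ae_nonneg_of_forall_setIntegral_nonneg hIntm
    intro A hA _
    set ind : ℝ → ℝ := A.indicator 1 with hind
    have hindm : Measurable ind := measurable_one.indicator hA
    have hind01 : ∀ β, ind β ∈ Set.Icc (0:ℝ) 1 := by
      intro β
      by_cases h : β ∈ A <;> simp [hind, h]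
    have hφm : ∀ j, Measurable fun β => ind β * c j (Y (pc β)) := fun j =>
      hindm.mul (hcm j).measurable
    have hφb : ∀ f : (Fin T → 𝒳 → ℝ) → ℝ, Continuous f →
        ∃ C, ∀ β, |ind β * f (Y (pc β))| ≤ C := by
      intro f hf
      obtain ⟨C, hC⟩ := hbd f hf
      refine ⟨C, fun β => ?_⟩
      rw [abs_mul, abs_of_nonneg (hind01 β).1]
      nlinarith [abs_nonneg (f (Y (pc β))), hC β, (hind01 β).1, (hind01 β).2]
    have hdint : Integrable (fun β => ind β * d (Y (pc β))) ρ := by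
      obtain ⟨C, hC⟩ := hφb d hd
      exact Integrable.of_bound (hindm.mul hdm.measurable).aestronglyMeasurable C
          (Filter.Eventually.of_forall hC)
    have hexp : ∀ q : ℕ × 𝒳 × 𝒰 → ℝ → ℝ, Adm q →
        ∫ β, ind β * (∑ j ∈ S, c j (Y (pc β)) * q j β + d (Y (pc β))) ∂ρ =
        ∑ j ∈ S, ∫ β, (ind β * c j (Y (pc β))) * q j β ∂ρ + ∫ β, ind β * d (Y (pc β)) ∂ρ := by
      intro q hq
      rw [← integral_finsetSum _ (fun j _ => hmint _ _ (hq j).1 (hq j).2 (hφm j) (hφb _ (hc j))),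
        ← integral_add (integrable_finsetSum _
          (fun j _ => hmint _ _ (hq j).1 (hq j).2 (hφm j) (hφb _ (hc j)))) hdint]
      congr 1
      ext β
      rw [mul_add, Finset.mul_sum]
      simp_rw [mul_assoc]
    have hge : ∀ η > 0, -(η * (S.card + 1)) ≤
        ∫ β, ind β * (∑ j ∈ S, c j (Y (pc β)) * m j β + d (Y (pc β))) ∂ρ := by
      intro η hη
      have hlim : Tendsto (fun n => ∫ β, ind β *
          (∑ j ∈ S, c j (Y (pc β)) * mn n j β + d (Y (pc β))) ∂ρ) 𝓕
          (nhds (∫ β, ind β * (∑ j ∈ S, c j (Y (pc β)) * m j β + d (Y (pc β))) ∂ρ)) := by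
        rw [hexp m hmadm]
        simp_rw [fun n => hexp (mn n) (hadm n)]
        apply Tendsto.add_const
        apply tendsto_finsetSum
        intro j _
        exact hmlim j _ (hφm j) (hφb _ (hc j))
      apply ge_of_tendsto hlim
      filter_upwards [happrox η hη] with n hn
      have hIntn : Integrable (fun β => ind β *
          (∑ j ∈ S, c j (Y (pc β)) * mn n j β + d (Y (pc β)))) ρ := by
        have : (fun β => ind β * (∑ j ∈ S, c j (Y (pc β)) * mn n j β + d (Y (pc β)))) =
          fun β => ∑ j ∈ S, (ind β * c j (Y (pc β))) * mn n j β + ind β * d (Y (pc β)) := by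
          ext β
          rw [mul_add, Finset.mul_sum]
          simp_rw [mul_assoc]
        rw [this]
        exact (integrable_finsetSum _
          (fun j _ => hmint _ _ (hadm n j).1 (hadm n j).2 (hφm j) (hφb _ (hc j)))).add hdint
      have : ∫ _β, -(η * (S.card + 1)) ∂ρ ≤ ∫ β, ind β *
          (∑ j ∈ S, c j (Y (pc β)) * mn n j β + d (Y (pc β))) ∂ρ := by
        apply integral_mono (integrable_const _) hIntn
        intro β
        have h1 := hn β
        have h2 : 0 ≤ η * (S.card + 1) := by positivity
        by_cases h : β ∈ A
        · simp only [hind, Set.indicator_of_mem h, Pi.one_apply, one_mul]; linarith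
        · simp only [hind, Set.indicator_of_notMem h, zero_mul]; linarith
      rw [integral_const, hprob, one_smul] at this
      exact this
    have hfin : 0 ≤ ∫ β, ind β * (∑ j ∈ S, c j (Y (pc β)) * m j β + d (Y (pc β))) ∂ρ := by
      by_contra hneg
      push Not at hneg
      set I := ∫ β, ind β * (∑ j ∈ S, c j (Y (pc β)) * m j β + d (Y (pc β))) ∂ρ
      have hc0 : (0:ℝ) < S.card + 1 := by positivity
      have := hge (-I / 2 / (S.card + 1)) (by apply div_pos _ hc0; linarith)
      rw [div_mul_cancel₀ _ hc0.ne'] at this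
      linarith
    rw [← integral_indicator hA]
    convert hfin using 2
    ext β
    by_cases h : β ∈ A <;> simp [hind, h]
end FPmain

section DP

/-- optimal value with k steps to go from time t -/
noncomputable def vfun {𝒳 𝒰 : Type*} [Fintype 𝒳] [Fintype 𝒰] [Nonempty 𝒰]
    (r : 𝒳 → 𝒰 → (𝒳 → ℝ) → ℝ) (P : 𝒳 → 𝒰 → (𝒳 → ℝ) → 𝒳 → ℝ) (G : ℕ → 𝒳 → ℝ) (k t : ℕ) (x : 𝒳) : ℝ :=
  Finset.univ.sup' Finset.univ_nonempty (fun u => Qfun r P G k t x u)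

theorem Qfun_le_vfun {𝒳 𝒰 : Type*} [Fintype 𝒳] [Fintype 𝒰] [Nonempty 𝒰]
    (r : 𝒳 → 𝒰 → (𝒳 → ℝ) → ℝ) (P : 𝒳 → 𝒰 → (𝒳 → ℝ) → 𝒳 → ℝ) (G : ℕ → 𝒳 → ℝ) (k t : ℕ) (x : 𝒳)
    (u : 𝒰) : Qfun r P G k t x u ≤ vfun r P G k t x :=
  Finset.le_sup' (fun u => Qfun r P G k t x u) (Finset.mem_univ u)

theorem dp_tele {𝒳 𝒰 : Type*} [Fintype 𝒳] [Fintype 𝒰] [Nonempty 𝒰] (T : ℕ)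
    (r : 𝒳 → 𝒰 → (𝒳 → ℝ) → ℝ) (P : 𝒳 → 𝒰 → (𝒳 → ℝ) → 𝒳 → ℝ) (G : ℕ → 𝒳 → ℝ) (μ0 : 𝒳 → ℝ)
    (f : ℕ → 𝒳 → 𝒰 → ℝ) (h0 : ∀ x, ∑ u, f 0 x u = μ0 x)
    (hflow : ∀ t x', ∑ u, f (t+1) x' u = ∑ x, ∑ u, f t x u * P x u (G t) x') (n : ℕ) (hn : n ≤ T) :
    ∑ t ∈ Finset.range n, ∑ x, ∑ u, f t x u * r x u (G t)
      + ∑ x, (∑ u, f n x u) * vfun r P G (T - n) n x =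
    ∑ x, μ0 x * vfun r P G T 0 x - ∑ t ∈ Finset.range n, ∑ x, ∑ u,
      f t x u * (vfun r P G (T - t) t x - Qfun r P G (T - t) t x u) := by
  induction n with
  | zero => simp [h0]
  | succ n ih =>
    have ih := ih (by omega)
    obtain ⟨k, hk⟩ : ∃ k, T - n = k + 1 := ⟨T - n - 1, by omega⟩
    have hk' : T - (n + 1) = k := by omega
    rw [Finset.sum_range_succ, Finset.sum_range_succ, hk']
    rw [hk] at ih ⊢
    have hQ : ∀ x u, Qfun r P G (k+1) n x u =
        r x u (G n) + ∑ x', P x u (G n) x' * vfun r P G k (n+1) x' := fun x u => rfl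
    have h1 : ∑ x, ∑ u, f n x u * (vfun r P G (k+1) n x - Qfun r P G (k+1) n x u) =
        ∑ x, (∑ u, f n x u) * vfun r P G (k+1) n x - ∑ x, ∑ u, f n x u * r x u (G n)
        - ∑ x, ∑ u, ∑ x', f n x u * P x u (G n) x' * vfun r P G k (n+1) x' := by
      rw [← Finset.sum_sub_distrib, ← Finset.sum_sub_distrib]
      refine Finset.sum_congr rfl fun x _ => ?_
      rw [Finset.sum_mul, ← Finset.sum_sub_distrib, ← Finset.sum_sub_distrib]
      refine Finset.sum_congr rfl fun u _ => ?_
      rw [hQ]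
      simp_rw [mul_assoc]
      rw [← Finset.mul_sum]; ring
    have h2 : ∑ x, (∑ u, f (n+1) x u) * vfun r P G k (n+1) x =
        ∑ x, ∑ u, ∑ x', f n x u * P x u (G n) x' * vfun r P G k (n+1) x' := by
      simp_rw [hflow, Finset.sum_mul]
      rw [Finset.sum_comm]
      refine Finset.sum_congr rfl fun x _ => ?_
      rw [Finset.sum_comm]
    rw [h1, h2]
    linarith

theorem dp_eq {𝒳 𝒰 : Type*} [Fintype 𝒳] [Fintype 𝒰] [Nonempty 𝒰] (T : ℕ)
    (r : 𝒳 → 𝒰 → (𝒳 → ℝ) → ℝ) (P : 𝒳 → 𝒰 → (𝒳 → ℝ) → 𝒳 → ℝ) (G : ℕ → 𝒳 → ℝ) (μ0 : 𝒳 → ℝ)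
    (f : ℕ → 𝒳 → 𝒰 → ℝ) (h0 : ∀ x, ∑ u, f 0 x u = μ0 x)
    (hflow : ∀ t x', ∑ u, f (t+1) x' u = ∑ x, ∑ u, f t x u * P x u (G t) x') :
    ∑ t ∈ Finset.range T, ∑ x, ∑ u, f t x u * r x u (G t) =
    ∑ x, μ0 x * vfun r P G T 0 x - ∑ t ∈ Finset.range T, ∑ x, ∑ u,
      f t x u * (vfun r P G (T - t) t x - Qfun r P G (T - t) t x u) := by
  rw [← dp_tele T r P G μ0 f h0 hflow T le_rfl]
  simp [vfun, Qfun]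

theorem dp_le {𝒳 𝒰 : Type*} [Fintype 𝒳] [Fintype 𝒰] [Nonempty 𝒰] (T : ℕ)
    (r : 𝒳 → 𝒰 → (𝒳 → ℝ) → ℝ) (P : 𝒳 → 𝒰 → (𝒳 → ℝ) → 𝒳 → ℝ) (G : ℕ → 𝒳 → ℝ) (μ0 : 𝒳 → ℝ)
    (f : ℕ → 𝒳 → 𝒰 → ℝ) (h0 : ∀ x, ∑ u, f 0 x u = μ0 x)
    (hflow : ∀ t x', ∑ u, f (t+1) x' u = ∑ x, ∑ u, f t x u * P x u (G t) x')
    (hpos : ∀ t x u, 0 ≤ f t x u) :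
    ∑ t ∈ Finset.range T, ∑ x, ∑ u, f t x u * r x u (G t) ≤ ∑ x, μ0 x * vfun r P G T 0 x := by
  rw [dp_eq T r P G μ0 f h0 hflow]
  have : 0 ≤ ∑ t ∈ Finset.range T, ∑ x, ∑ u,
      f t x u * (vfun r P G (T - t) t x - Qfun r P G (T - t) t x u) :=
    Finset.sum_nonneg fun t _ => Finset.sum_nonneg fun x _ => Finset.sum_nonneg fun u _ =>
      mul_nonneg (hpos t x u) (sub_nonneg.2 (Qfun_le_vfun r P G _ _ _ _))
  linarith

theorem Jmf_eq {𝒳 𝒰 : Type*} [Fintype 𝒳] [Fintype 𝒰] (T : ℕ) (r : 𝒳 → 𝒰 → (𝒳 → ℝ) → ℝ)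
    (P : 𝒳 → 𝒰 → (𝒳 → ℝ) → 𝒳 → ℝ) (μ0 : 𝒳 → ℝ) (G : ℕ → 𝒳 → ℝ) (π : ℕ → 𝒳 → 𝒰 → ℝ) :
    Jmf T r P μ0 G π = ∑ t ∈ Finset.range T, ∑ x, ∑ u,
      (stateLaw P μ0 G π t x * π t x u) * r x u (G t) := by
  simp only [Jmf, Finset.mul_sum, mul_assoc]

theorem stateLaw_flow {𝒳 𝒰 : Type*} [Fintype 𝒳] [Fintype 𝒰]
    (P : 𝒳 → 𝒰 → (𝒳 → ℝ) → 𝒳 → ℝ) (μ0 : 𝒳 → ℝ) (G : ℕ → 𝒳 → ℝ) (π : ℕ → 𝒳 → 𝒰 → ℝ)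
    (hπ : IsPolicy π) :
    (∀ t x, ∑ u, stateLaw P μ0 G π t x * π t x u = stateLaw P μ0 G π t x) ∧
    (∀ t x', ∑ u, stateLaw P μ0 G π (t+1) x' * π (t+1) x' u =
      ∑ x, ∑ u, (stateLaw P μ0 G π t x * π t x u) * P x u (G t) x') := by
  have h : ∀ t x, ∑ u, stateLaw P μ0 G π t x * π t x u = stateLaw P μ0 G π t x := by
    intro t x
    rw [← Finset.mul_sum, (hπ t x).2, mul_one]
  refine ⟨h, fun t x' => ?_⟩
  rw [h]
  simp only [stateLaw, Finset.mul_sum, mul_assoc]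

theorem stateLaw_simplex {𝒳 𝒰 : Type*} [Fintype 𝒳] [Fintype 𝒰]
    (P : 𝒳 → 𝒰 → (𝒳 → ℝ) → 𝒳 → ℝ) (hP : ∀ x u ν, P x u ν ∈ simplex 𝒳)
    (μ0 : 𝒳 → ℝ) (hμ0 : μ0 ∈ simplex 𝒳) (G : ℕ → 𝒳 → ℝ) (π : ℕ → 𝒳 → 𝒰 → ℝ)
    (hπ : IsPolicy π) (t : ℕ) : stateLaw P μ0 G π t ∈ simplex 𝒳 := by
  induction t with
  | zero => exact hμ0
  | succ t ih =>
    refine ⟨fun x' => ?_, ?_⟩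
    · exact Finset.sum_nonneg fun x _ => mul_nonneg (ih.1 x) (Finset.sum_nonneg fun u _ =>
        mul_nonneg ((hπ t x).1 u) ((hP x u _).1 x'))
    · simp only [stateLaw]
      rw [Finset.sum_comm]
      rw [← ih.2]
      refine Finset.sum_congr rfl fun x _ => ?_
      rw [← Finset.mul_sum, Finset.sum_comm]
      simp_rw [← Finset.mul_sum, (hP _ _ _).2, mul_one, (hπ t x).2, mul_one]

theorem Jmf_le {𝒳 𝒰 : Type*} [Fintype 𝒳] [Fintype 𝒰] [Nonempty 𝒰] (T : ℕ)
    (r : 𝒳 → 𝒰 → (𝒳 → ℝ) → ℝ)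
    (P : 𝒳 → 𝒰 → (𝒳 → ℝ) → 𝒳 → ℝ) (hP : ∀ x u ν, P x u ν ∈ simplex 𝒳)
    (μ0 : 𝒳 → ℝ) (hμ0 : μ0 ∈ simplex 𝒳) (G : ℕ → 𝒳 → ℝ) (π : ℕ → 𝒳 → 𝒰 → ℝ)
    (hπ : IsPolicy π) : Jmf T r P μ0 G π ≤ ∑ x, μ0 x * vfun r P G T 0 x := by
  rw [Jmf_eq]
  apply dp_le T r P G μ0 (fun t x u => stateLaw P μ0 G π t x * π t x u)
  · exact fun x => (stateLaw_flow P μ0 G π hπ).1 0 x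
  · exact (stateLaw_flow P μ0 G π hπ).2
  · exact fun t x u => mul_nonneg ((stateLaw_simplex P hP μ0 hμ0 G π hπ t).1 x) ((hπ t x).1 u)

open Classical in
/-- uniform distribution over maximizers -/
noncomputable def gr {𝒰 : Type*} [Fintype 𝒰] (q : 𝒰 → ℝ) (u : 𝒰) : ℝ :=
  (if ∀ u', q u' ≤ q u then (1:ℝ) else 0) / ∑ v, (if ∀ u', q u' ≤ q v then (1:ℝ) else 0)

theorem gr_nonneg {𝒰 : Type*} [Fintype 𝒰] (q : 𝒰 → ℝ) (u : 𝒰) : 0 ≤ gr q u := by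
  unfold gr
  apply div_nonneg
  · split_ifs <;> norm_num
  · exact Finset.sum_nonneg fun v _ => by split_ifs <;> norm_num

theorem gr_sum {𝒰 : Type*} [Fintype 𝒰] [Nonempty 𝒰] (q : 𝒰 → ℝ) : ∑ u, gr q u = 1 := by
  unfold gr
  rw [← Finset.sum_div]
  apply div_self
  obtain ⟨u, hu⟩ := Finite.exists_max q
  have : (1:ℝ) ≤ ∑ v, (if ∀ u', q u' ≤ q v then (1:ℝ) else 0) := by
    have h1 := Finset.single_le_sum (f := fun v => (if ∀ u', q u' ≤ q v then (1:ℝ) else 0))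
      (fun v _ => by split_ifs <;> norm_num) (Finset.mem_univ u)
    simp only [if_pos hu] at h1
    exact h1
  linarith

theorem gr_mul {𝒰 : Type*} [Fintype 𝒰] [Nonempty 𝒰] (q : 𝒰 → ℝ) (u : 𝒰) :
    gr q u * (Finset.univ.sup' Finset.univ_nonempty q - q u) = 0 := by
  by_cases h : ∀ u', q u' ≤ q u
  · have : Finset.univ.sup' Finset.univ_nonempty q = q u :=
      le_antisymm (Finset.sup'_le _ _ fun u' _ => h u') (Finset.le_sup' q (Finset.mem_univ u))
    rw [this, sub_self, mul_zero]
  · unfold gr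
    rw [if_neg h]; simp

theorem gr_measurable {𝒰 Ω : Type*} [Fintype 𝒰] [MeasurableSpace Ω] (q : Ω → 𝒰 → ℝ)
    (hq : ∀ u, Measurable fun ω => q ω u) (u : 𝒰) : Measurable fun ω => gr (q ω) u := by
  have h : ∀ v, Measurable fun ω => (if ∀ u', q ω u' ≤ q ω v then (1:ℝ) else 0) := by
    intro v
    apply Measurable.ite _ measurable_const measurable_const
    have : {ω | ∀ u', q ω u' ≤ q ω v} = ⋂ u', {ω | q ω u' ≤ q ω v} := by ext; simp
    rw [this]
    exact MeasurableSet.iInter fun u' => measurableSet_le (hq u') (hq v)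
  unfold gr
  exact (h u).div (Finset.measurable_sum _ fun v _ => h v)

/-- greedy policy -/
noncomputable def grPol {𝒳 𝒰 : Type*} [Fintype 𝒳] [Fintype 𝒰] [Nonempty 𝒰] (T : ℕ)
    (r : 𝒳 → 𝒰 → (𝒳 → ℝ) → ℝ)
    (P : 𝒳 → 𝒰 → (𝒳 → ℝ) → 𝒳 → ℝ) (G : ℕ → 𝒳 → ℝ) : ℕ → 𝒳 → 𝒰 → ℝ :=
  fun t x u => gr (Qfun r P G (T - t) t x) u

theorem grPol_policy {𝒳 𝒰 : Type*} [Fintype 𝒳] [Fintype 𝒰] [Nonempty 𝒰] (T : ℕ)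
    (r : 𝒳 → 𝒰 → (𝒳 → ℝ) → ℝ)
    (P : 𝒳 → 𝒰 → (𝒳 → ℝ) → 𝒳 → ℝ) (G : ℕ → 𝒳 → ℝ) : IsPolicy (grPol T r P G) :=
  fun _ _ => ⟨fun _ => gr_nonneg _ _, gr_sum _⟩

theorem Jmf_greedy {𝒳 𝒰 : Type*} [Fintype 𝒳] [Fintype 𝒰] [Nonempty 𝒰] (T : ℕ)
    (r : 𝒳 → 𝒰 → (𝒳 → ℝ) → ℝ)
    (P : 𝒳 → 𝒰 → (𝒳 → ℝ) → 𝒳 → ℝ) (μ0 : 𝒳 → ℝ) (G : ℕ → 𝒳 → ℝ) :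
    Jmf T r P μ0 G (grPol T r P G) = ∑ x, μ0 x * vfun r P G T 0 x := by
  have hπ := grPol_policy T r P G
  rw [Jmf_eq, dp_eq T r P G μ0 (fun t x u => stateLaw P μ0 G (grPol T r P G) t x * grPol T r P G t x u)
    (fun x => (stateLaw_flow P μ0 G _ hπ).1 0 x) (stateLaw_flow P μ0 G _ hπ).2]
  rw [sub_eq_self]
  refine Finset.sum_eq_zero fun t _ => Finset.sum_eq_zero fun x _ => Finset.sum_eq_zero fun u _ => ?_
  rw [mul_assoc]
  have := gr_mul (Qfun r P G (T - t) t x) u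
  unfold grPol vfun
  rw [this, mul_zero]

theorem Qfun_cont {𝒳 𝒰 V : Type*} [TopologicalSpace V] [Fintype 𝒳] [Fintype 𝒰] [Nonempty 𝒰]
    (r : 𝒳 → 𝒰 → (𝒳 → ℝ) → ℝ) (hr : ∀ x u, Continuous (r x u))
    (P : 𝒳 → 𝒰 → (𝒳 → ℝ) → 𝒳 → ℝ) (hP : ∀ x u, Continuous (P x u))
    (G : V → ℕ → 𝒳 → ℝ) (hG : ∀ t, Continuous fun v => G v t) (k : ℕ) :
    ∀ t x u, Continuous fun v => Qfun r P (G v) k t x u := by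
  induction k with
  | zero => intro t x u; exact continuous_const
  | succ k ih =>
    intro t x u
    simp only [Qfun]
    refine ((hr x u).comp (hG t)).add (continuous_finsetSum _ fun x' _ => ?_)
    refine ((continuous_apply x').comp ((hP x u).comp (hG t))).mul ?_
    exact Continuous.finset_sup'_apply _ fun u' _ => ih (t+1) x' u'

theorem vfun_cont {𝒳 𝒰 V : Type*} [TopologicalSpace V] [Fintype 𝒳] [Fintype 𝒰] [Nonempty 𝒰]
    (r : 𝒳 → 𝒰 → (𝒳 → ℝ) → ℝ) (hr : ∀ x u, Continuous (r x u))
    (P : 𝒳 → 𝒰 → (𝒳 → ℝ) → 𝒳 → ℝ) (hP : ∀ x u, Continuous (P x u))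
    (G : V → ℕ → 𝒳 → ℝ) (hG : ∀ t, Continuous fun v => G v t) (k t : ℕ) (x : 𝒳) :
    Continuous fun v => vfun r P (G v) k t x := 
  Continuous.finset_sup'_apply _ fun u' _ => Qfun_cont r hr P hP G hG k t x u'

theorem stateLaw_meas {𝒳 𝒰 Ω : Type*} [MeasurableSpace Ω] [Fintype 𝒳] [Fintype 𝒰]
    (P : 𝒳 → 𝒰 → (𝒳 → ℝ) → 𝒳 → ℝ) (hP : ∀ x u, Continuous (P x u)) (μ0 : 𝒳 → ℝ)
    (G : Ω → ℕ → 𝒳 → ℝ) (hG : ∀ t, Measurable fun v => G v t)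
    (π : Ω → ℕ → 𝒳 → 𝒰 → ℝ) (hπ : ∀ t x u, Measurable fun ω => π ω t x u) (t : ℕ) :
    ∀ x, Measurable fun ω => stateLaw P μ0 (G ω) (π ω) t x := by
  induction t with
  | zero => intro x; exact measurable_const
  | succ t ih =>
    intro x'
    simp only [stateLaw]
    refine Finset.measurable_sum _ fun x _ => (ih x).mul (Finset.measurable_sum _ fun u _ => ?_)
    exact (hπ t x u).mul ((measurable_pi_apply x').comp ((hP x u).measurable.comp (hG t)))

/-- extend a finite horizon path by zero -/
noncomputable def Gof {𝒳 : Type*} {T : ℕ} (v : Fin T → 𝒳 → ℝ) (t : ℕ) : 𝒳 → ℝ :=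
  if h : t < T then v ⟨t, h⟩ else 0

theorem Gof_cont {𝒳 : Type*} {T : ℕ} (t : ℕ) :
    Continuous fun v : Fin T → 𝒳 → ℝ => Gof v t := by
  unfold Gof
  split_ifs with h
  · exact continuous_apply _
  · exact continuous_const

theorem stateLaw_congr {𝒳 𝒰 : Type*} [Fintype 𝒳] [Fintype 𝒰]
    (P : 𝒳 → 𝒰 → (𝒳 → ℝ) → 𝒳 → ℝ) (P' : 𝒳 → 𝒰 → (𝒳 → ℝ) → 𝒳 → ℝ) (μ0 : 𝒳 → ℝ)
    (G G' : ℕ → 𝒳 → ℝ) (π : ℕ → 𝒳 → 𝒰 → ℝ) (T : ℕ)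
    (h : ∀ t < T, ∀ x u, P x u (G t) = P' x u (G' t)) (t : ℕ) (ht : t ≤ T) :
    stateLaw P μ0 G π t = stateLaw P' μ0 G' π t := by
  induction t with
  | zero => rfl
  | succ t ih =>
    ext x'
    simp only [stateLaw, ih (by omega), h t (by omega)]

theorem Jmf_congr {𝒳 𝒰 : Type*} [Fintype 𝒳] [Fintype 𝒰] (T : ℕ)
    (r r' : 𝒳 → 𝒰 → (𝒳 → ℝ) → ℝ)
    (P : 𝒳 → 𝒰 → (𝒳 → ℝ) → 𝒳 → ℝ) (P' : 𝒳 → 𝒰 → (𝒳 → ℝ) → 𝒳 → ℝ) (μ0 : 𝒳 → ℝ)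
    (G G' : ℕ → 𝒳 → ℝ) (π : ℕ → 𝒳 → 𝒰 → ℝ)
    (h : ∀ t < T, ∀ x u, P x u (G t) = P' x u (G' t))
    (hr : ∀ t < T, ∀ x u, r x u (G t) = r' x u (G' t)) :
    Jmf T r P μ0 G π = Jmf T r' P' μ0 G' π := by
  unfold Jmf
  refine Finset.sum_congr rfl fun t ht => ?_
  have ht := Finset.mem_range.1 ht
  rw [stateLaw_congr P P' μ0 G G' π T h t ht.le]
  simp only [hr t ht]

end DP

section Main

/-- the mean field generated by a policy ensemble -/
noncomputable def muRec {𝒳 𝒰 : Type*} [Fintype 𝒳] [Fintype 𝒰] (W : ℝ → ℝ → ℝ)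
    (P : 𝒳 → 𝒰 → (𝒳 → ℝ) → 𝒳 → ℝ) (μ0 : 𝒳 → ℝ) (πe : ℝ → ℕ → 𝒳 → 𝒰 → ℝ) : ℕ → ℝ → 𝒳 → ℝ
  | 0 => fun _ => μ0
  | (t+1) => fun α x' => ∑ x, muRec W P μ0 πe t α x *
      ∑ u, πe α t x u * P x u (nbhd W (muRec W P μ0 πe t) α) x'

theorem nbhd_meas {𝒳 : Type*} [Fintype 𝒳] {W : ℝ → ℝ → ℝ} (hW : IsGraphon W)
    (ν : ℝ → 𝒳 → ℝ) (hν : ∀ x, Measurable fun β => ν β x) : Measurable (nbhd W ν) := by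
  rw [measurable_pi_iff]
  intro x
  have : Measurable (Function.uncurry fun α β : ℝ => W α β * ν β x) := by
    have h1 := hW.1
    exact h1.mul ((hν x).comp measurable_snd)
  exact (this.stronglyMeasurable.integral_prod_right).measurable

theorem nbhd_subProb {𝒳 : Type*} [Fintype 𝒳] {W : ℝ → ℝ → ℝ} (hW : IsGraphon W)
    (ν : ℝ → 𝒳 → ℝ) (hν : ∀ x, Measurable fun β => ν β x) (hs : ∀ β, ν β ∈ simplex 𝒳) (α : ℝ) :
    nbhd W ν α ∈ subProb 𝒳 := by
  have hb : ∀ x β, |ν β x| ≤ 1 := by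
    intro x β
    rw [abs_of_nonneg ((hs β).1 x), ← (hs β).2]
    exact Finset.single_le_sum (f := ν β) (fun x _ => (hs β).1 x) (Finset.mem_univ x)
  refine ⟨fun x => ?_, ?_⟩
  · exact integral_nonneg fun β => mul_nonneg (hW.2.2 α β).1 ((hs β).1 x)
  · simp only [nbhd]
    rw [← integral_finsetSum _ (fun x _ => W_int hW α (hν x) (hb x))]
    calc ∫ β in Set.Ioc (0:ℝ) 1, ∑ x, W α β * ν β x ≤ ∫ _β in Set.Ioc (0:ℝ) 1, (1:ℝ) := by
          apply integral_mono
          · exact integrable_finsetSum _ (fun x _ => W_int hW α (hν x) (hb x))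
          · exact integrable_const _
          · intro β
            dsimp only
            rw [← Finset.mul_sum, (hs β).2, mul_one]
            exact (hW.2.2 α β).2
      _ = 1 := by simp

theorem muRec_simplex {𝒳 𝒰 : Type*} [Fintype 𝒳] [Fintype 𝒰] (W : ℝ → ℝ → ℝ)
    (P : 𝒳 → 𝒰 → (𝒳 → ℝ) → 𝒳 → ℝ) (hP : ∀ x u ν, P x u ν ∈ simplex 𝒳)
    (μ0 : 𝒳 → ℝ) (hμ0 : μ0 ∈ simplex 𝒳) (πe : ℝ → ℕ → 𝒳 → 𝒰 → ℝ) (hπ : ∀ α, IsPolicy (πe α))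
    (t : ℕ) (α : ℝ) : muRec W P μ0 πe t α ∈ simplex 𝒳 := by
  have : muRec W P μ0 πe t α = stateLaw P μ0 (fun t => nbhd W (muRec W P μ0 πe t) α) (πe α) t := by
    induction t with
    | zero => rfl
    | succ t ih =>
      ext x'
      simp only [stateLaw, muRec, ← ih]
  rw [this]
  exact stateLaw_simplex P hP μ0 hμ0 _ _ (hπ α) t

theorem muRec_meas {𝒳 𝒰 : Type*} [Fintype 𝒳] [Fintype 𝒰] {W : ℝ → ℝ → ℝ} (hW : IsGraphon W)
    (P : 𝒳 → 𝒰 → (𝒳 → ℝ) → 𝒳 → ℝ) (hP : ∀ x u, Continuous (P x u))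
    (μ0 : 𝒳 → ℝ) (πe : ℝ → ℕ → 𝒳 → 𝒰 → ℝ) (hπ : ∀ t x u, Measurable fun α => πe α t x u)
    (t : ℕ) : ∀ x, Measurable fun α => muRec W P μ0 πe t α x := by
  induction t with
  | zero => intro x; exact measurable_const
  | succ t ih =>
    intro x'
    simp only [muRec]
    refine Finset.measurable_sum _ fun x _ => (ih x).mul (Finset.measurable_sum _ fun u _ => ?_)
    exact (hπ t x u).mul ((measurable_pi_apply x').comp
      ((hP x u).measurable.comp (nbhd_meas hW _ ih)))

/-- conditional policy of an occupation measure -/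
noncomputable def condPol {𝒳 𝒰 : Type*} [Fintype 𝒰] (f : ℕ × 𝒳 × 𝒰 → ℝ) : ℕ → 𝒳 → 𝒰 → ℝ :=
  fun t x u => if 0 < ∑ v, f (t, x, v) then f (t, x, u) / ∑ v, f (t, x, v)
    else 1 / Fintype.card 𝒰

theorem condPol_policy {𝒳 𝒰 : Type*} [Fintype 𝒰] [Nonempty 𝒰] (f : ℕ × 𝒳 × 𝒰 → ℝ)
    (hf : ∀ j, 0 ≤ f j) : IsPolicy (condPol f) := by
  intro t x
  unfold condPol
  split_ifs with h
  · exact ⟨fun u => div_nonneg (hf _) h.le, by rw [← Finset.sum_div]; exact div_self h.ne'⟩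
  · refine ⟨fun u => by positivity, ?_⟩
    simp

theorem condPol_mul {𝒳 𝒰 : Type*} [Fintype 𝒰] (f : ℕ × 𝒳 × 𝒰 → ℝ)
    (hf : ∀ j, 0 ≤ f j) (t : ℕ) (x : 𝒳) (u : 𝒰) :
    (∑ v, f (t, x, v)) * condPol f t x u = f (t, x, u) := by
  unfold condPol
  split_ifs with h
  · field_simp
  · have h0 : ∑ v, f (t, x, v) = 0 := le_antisymm (not_lt.1 h) (Finset.sum_nonneg fun v _ => hf _)
    rw [h0, zero_mul]
    exact ((Finset.sum_eq_zero_iff_of_nonneg fun v _ => hf _).1 h0 u (Finset.mem_univ u)).symm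

theorem gmfe_cont {𝒳 𝒰 : Type*} [Fintype 𝒳] [Fintype 𝒰] [Nonempty 𝒰]
    (T : ℕ) (μ0 : 𝒳 → ℝ) (hμ0 : μ0 ∈ simplex 𝒳)
    (P : 𝒳 → 𝒰 → (𝒳 → ℝ) → 𝒳 → ℝ) (hP : ∀ x u ν, P x u ν ∈ simplex 𝒳)
    (hPc : ∀ x u, Continuous (P x u))
    (r : 𝒳 → 𝒰 → (𝒳 → ℝ) → ℝ) (hrc : ∀ x u, Continuous (r x u))
    (W : ℝ → ℝ → ℝ) (hW : IsGraphon W) (LW : ℝ) (hWLip : GraphonLipschitz W LW) :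
    ∃ (πe : ℝ → ℕ → 𝒳 → 𝒰 → ℝ) (μ : ℕ → ℝ → 𝒳 → ℝ), IsGMFE T W P r μ0 πe μ ∧
      ∀ t α, μ t α ∈ simplex 𝒳 := by
  classical
  set pc : ℝ → Set.Icc (0:ℝ) 1 := Set.projIcc 0 1 zero_le_one with hpc
  have hpcc : Continuous pc := continuous_projIcc
  let Gy : C(Set.Icc (0:ℝ) 1, Fin T → 𝒳 → ℝ) → ℝ → ℕ → 𝒳 → ℝ := fun y β => Gof (y (pc β))
  have hGy : ∀ y t, Continuous fun β => Gy y β t := fun y t =>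
    (Gof_cont t).comp (y.continuous.comp hpcc)
  have hgrm : ∀ y t x u, Measurable fun β => grPol T r P (Gy y β) t x u := by
    intro y t x u
    exact gr_measurable (fun β => Qfun r P (Gy y β) (T - t) t x)
      (fun u => (Qfun_cont r hrc P hPc (Gy y) (hGy y) (T - t) t x u).measurable) u
  let mg : C(Set.Icc (0:ℝ) 1, Fin T → 𝒳 → ℝ) → ℕ × 𝒳 × 𝒰 → ℝ → ℝ := fun y j β =>
    stateLaw P μ0 (Gy y β) (grPol T r P (Gy y β)) j.1 j.2.1 * grPol T r P (Gy y β) j.1 j.2.1 j.2.2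
  have hmg : ∀ y, Adm (mg y) := by
    rintro y ⟨t, x, u⟩
    refine ⟨?_, fun β => ?_⟩
    · exact (stateLaw_meas P hPc μ0 (Gy y) (fun t => (hGy y t).measurable)
        (fun β => grPol T r P (Gy y β)) (hgrm y) t x).mul (hgrm y t x u)
    · have h1 := stateLaw_simplex P hP μ0 hμ0 (Gy y β) _ (grPol_policy T r P (Gy y β)) t
      have h2 := grPol_policy T r P (Gy y β) t x
      have h3 : stateLaw P μ0 (Gy y β) (grPol T r P (Gy y β)) t x ≤ 1 := by
        rw [← h1.2]
        exact Finset.single_le_sum (f := fun x => stateLaw P μ0 (Gy y β) (grPol T r P (Gy y β)) t x)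
          (fun x _ => h1.1 x) (Finset.mem_univ x)
      have h4 : grPol T r P (Gy y β) t x u ≤ 1 := by
        rw [← h2.2]
        exact Finset.single_le_sum (f := fun u => grPol T r P (Gy y β) t x u)
          (fun x _ => h2.1 x) (Finset.mem_univ u)
      exact ⟨mul_nonneg (h1.1 x) (h2.1 u), mul_le_one₀ h3 (h2.1 u) h4⟩
  obtain ⟨m, Y, hm, hY, hcond⟩ := fp_main T hW hWLip mg hmg
  set ρ := (volume.restrict (Set.Ioc (0:ℝ) 1)) with hρ
  have hcondeq : ∀ (S : Finset (ℕ × 𝒳 × 𝒰)) (c : ℕ × 𝒳 × 𝒰 → (Fin T → 𝒳 → ℝ) → ℝ)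
        (d : (Fin T → 𝒳 → ℝ) → ℝ), (∀ j, Continuous (c j)) → Continuous d →
        (∀ (y : C(Set.Icc (0:ℝ) 1, Fin T → 𝒳 → ℝ)) (β : ℝ),
          ∑ j ∈ S, c j (y (pc β)) * mg y j β + d (y (pc β)) = 0) →
        ∀ᵐ β ∂ρ, ∑ j ∈ S, c j (Y (pc β)) * m j β + d (Y (pc β)) = 0 := by
    intro S c d hc hd h
    have h1 := hcond S c d hc hd (fun y β => (h y β).ge)
    have h2 := hcond S (fun j v => - c j v) (fun v => - d v) (fun j => (hc j).neg) hd.neg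
      (fun y β => by
        have := h y β
        simp only [neg_mul, Finset.sum_neg_distrib]
        linarith)
    filter_upwards [h1, h2] with β a b
    simp only [neg_mul, Finset.sum_neg_distrib] at b
    exact le_antisymm (by linarith) a
  have c1 : ∀ x, ∀ᵐ β ∂ρ, ∑ u, m (0, x, u) β = μ0 x := by
    intro x
    have := hcondeq ({0} ×ˢ {x} ×ˢ Finset.univ) (fun _ _ => 1) (fun _ => - μ0 x)
      (fun _ => continuous_const) continuous_const (fun y β => by
        simp only [Finset.sum_product, Finset.sum_singleton, one_mul]
        have h := (stateLaw_flow P μ0 (Gy y β) _ (grPol_policy T r P (Gy y β))).1 0 x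
        change (∑ u, stateLaw P μ0 (Gy y β) (grPol T r P (Gy y β)) 0 x
          * grPol T r P (Gy y β) 0 x u) + - μ0 x = 0
        rw [h]; simp [stateLaw])
    filter_upwards [this] with β h
    simp only [Finset.sum_product, Finset.sum_singleton, one_mul] at h
    linarith
  have hexp : ∀ (t : ℕ) (x' : 𝒳) (q : ℕ × 𝒳 × 𝒰 → ℝ) (p : 𝒳 → 𝒰 → ℝ),
      ∑ j ∈ ({t, t+1} : Finset ℕ) ×ˢ (Finset.univ : Finset 𝒳) ×ˢ (Finset.univ : Finset 𝒰),
        (if j.1 = t then - p j.2.1 j.2.2 else if j.2.1 = x' then 1 else 0) * q j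
      = ∑ u, q (t+1, x', u) - ∑ x, ∑ u, q (t, x, u) * p x u := by
    intro t x' q p
    rw [Finset.sum_product, Finset.sum_pair (by omega), Finset.sum_product, Finset.sum_product]
    simp only [if_true]
    have : ¬ (t + 1 = t) := by omega
    simp only [this, if_false, neg_mul, Finset.sum_neg_distrib, ite_mul, one_mul, zero_mul]
    have e : ∀ x, ∑ u, (if x = x' then q (t+1, x, u) else 0) =
        if x = x' then ∑ u, q (t+1, x, u) else 0 := by
      intro x; split_ifs <;> simp
    simp only [e, Finset.sum_ite_eq', Finset.mem_univ, if_true]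
    rw [neg_add_eq_sub]
    congr 1
    exact Finset.sum_congr rfl fun x _ => Finset.sum_congr rfl fun u _ => mul_comm _ _
  have c2 : ∀ t x', ∀ᵐ β ∂ρ, ∑ u, m (t+1, x', u) β =
      ∑ x, ∑ u, m (t, x, u) β * P x u (Gy Y β t) x' := by
    intro t x'
    have := hcondeq (({t, t+1} : Finset ℕ) ×ˢ (Finset.univ : Finset 𝒳) ×ˢ (Finset.univ : Finset 𝒰))
      (fun j v => if j.1 = t then - P j.2.1 j.2.2 (Gof v t) x' else if j.2.1 = x' then 1 else 0)
      (fun _ => 0)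
      (fun j => by
        split_ifs
        · exact ((continuous_apply x').comp ((hPc _ _).comp (Gof_cont t))).neg
        · exact continuous_const
        · exact continuous_const) continuous_const (fun y β => by
        rw [hexp t x' (fun j => mg y j β) (fun x u => P x u (Gof (y (pc β)) t) x')]
        have h := (stateLaw_flow P μ0 (Gy y β) _ (grPol_policy T r P (Gy y β))).2 t x'
        rw [add_zero, sub_eq_zero]
        exact h)
    filter_upwards [this] with β h
    rw [hexp t x' (fun j => m j β) (fun x u => P x u (Gof (Y (pc β)) t) x'), add_zero,
      sub_eq_zero] at h
    exact h
  have c3 : ∀ᵐ β ∂ρ, ∑ x, μ0 x * vfun r P (Gy Y β) T 0 x ≤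
      ∑ t ∈ Finset.range T, ∑ x, ∑ u, m (t, x, u) β * r x u (Gy Y β t) := by
    have hexp3 : ∀ (q : ℕ × 𝒳 × 𝒰 → ℝ) (p : ℕ → 𝒳 → 𝒰 → ℝ),
      ∑ j ∈ Finset.range T ×ˢ (Finset.univ : Finset 𝒳) ×ˢ (Finset.univ : Finset 𝒰),
        p j.1 j.2.1 j.2.2 * q j = ∑ t ∈ Finset.range T, ∑ x, ∑ u, q (t, x, u) * p t x u := by
      intro q p
      rw [Finset.sum_product]
      refine Finset.sum_congr rfl fun t _ => ?_
      rw [Finset.sum_product]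
      exact Finset.sum_congr rfl fun x _ => Finset.sum_congr rfl fun u _ => mul_comm _ _
    have := hcond (Finset.range T ×ˢ (Finset.univ : Finset 𝒳) ×ˢ (Finset.univ : Finset 𝒰))
      (fun j v => r j.2.1 j.2.2 (Gof v j.1)) (fun v => - ∑ x, μ0 x * vfun r P (Gof v) T 0 x)
      (fun j => (hrc _ _).comp (Gof_cont _))
      (continuous_finsetSum _ fun x _ => continuous_const.mul
        (vfun_cont r hrc P hPc Gof Gof_cont T 0 x)).neg
      (fun y β => by
        rw [hexp3 (fun j => mg y j β) (fun t x u => r x u (Gof (y (pc β)) t))]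
        have h := Jmf_greedy T r P μ0 (Gy y β)
        rw [Jmf_eq] at h
        rw [← sub_eq_add_neg, sub_nonneg]
        exact h.ge)
    filter_upwards [this] with β h
    rw [hexp3 (fun j => m j β) (fun t x u => r x u (Gof (Y (pc β)) t)), ← sub_eq_add_neg,
      sub_nonneg] at h
    exact h
  let Good : ℝ → Prop := fun β => (∀ x, ∑ u, m (0, x, u) β = μ0 x) ∧
    (∀ t x', ∑ u, m (t+1, x', u) β = ∑ x, ∑ u, m (t, x, u) β * P x u (Gy Y β t) x') ∧
    ∑ x, μ0 x * vfun r P (Gy Y β) T 0 x ≤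
      ∑ t ∈ Finset.range T, ∑ x, ∑ u, m (t, x, u) β * r x u (Gy Y β t)
  have hgood : ∀ᵐ β ∂ρ, Good β := by
    have a1 := ae_all_iff.2 c1
    have a2 := ae_all_iff.2 fun t => ae_all_iff.2 (c2 t)
    filter_upwards [a1, a2, c3] with β h1 h2 h3 using ⟨h1, h2, h3⟩
  set N := toMeasurable ρ {β | ¬ Good β} with hN
  have hNm : MeasurableSet N := measurableSet_toMeasurable _ _
  have hN0 : ρ N = 0 := by rw [hN, measure_toMeasurable]; exact hgood
  have hNg : ∀ β, β ∉ N → Good β := by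
    intro β hβ
    by_contra h
    exact hβ (subset_toMeasurable _ _ h)
  let πe : ℝ → ℕ → 𝒳 → 𝒰 → ℝ := fun β t x u =>
    if β ∈ N then grPol T r P (Gy Y β) t x u else condPol (fun j => m j β) t x u
  have hm0 : ∀ j β, 0 ≤ m j β := fun j β => ((hm j).2 β).1
  have hπb : ∀ β, β ∈ N → πe β = grPol T r P (Gy Y β) := by
    intro β h; ext t x u; simp only [πe, if_pos h]
  have hπg : ∀ β, β ∉ N → πe β = condPol (fun j => m j β) := by
    intro β h; ext t x u; simp only [πe, if_neg h]
  have hπ : ∀ β, IsPolicy (πe β) := by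
    intro β
    by_cases h : β ∈ N
    · rw [hπb β h]; exact grPol_policy _ _ _ _
    · rw [hπg β h]; exact condPol_policy _ fun j => hm0 j β
  have hπm : ∀ t x u, Measurable fun β => πe β t x u := by
    intro t x u
    apply Measurable.ite hNm (hgrm Y t x u)
    unfold condPol
    apply Measurable.ite
    · exact measurableSet_lt measurable_const (adm_sum hm t x).1
    · exact (hm _).1.div (adm_sum hm t x).1
    · exact measurable_const
  -- state law on the good set
  have hlaw : ∀ β, β ∉ N → ∀ t x, stateLaw P μ0 (Gy Y β) (πe β) t x = ∑ u, m (t, x, u) β := by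
    intro β hβ t
    have hg := hNg β hβ
    rw [hπg β hβ]
    induction t with
    | zero => intro x; exact (hg.1 x).symm
    | succ t ih =>
      intro x'
      rw [hg.2.1 t x']
      simp only [stateLaw]
      refine Finset.sum_congr rfl fun x _ => ?_
      rw [ih x, Finset.mul_sum]
      refine Finset.sum_congr rfl fun u _ => ?_
      rw [← mul_assoc, condPol_mul (fun j => m j β) (fun j => hm0 j β)]
  set μ := muRec W P μ0 πe with hμ
  have hNae : ∀ᵐ β ∂ρ, β ∉ N := measure_eq_zero_iff_ae_notMem.1 hN0
  have hnb : ∀ t, t < T → (∀ α ∈ Set.Icc (0:ℝ) 1, μ t α = stateLaw P μ0 (Gy Y α) (πe α) t) →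
      ∀ α ∈ Set.Icc (0:ℝ) 1, nbhd W (μ t) α = Gy Y α t := by
    intro t ht h α hα
    ext x
    have e1 : Gy Y α t x = Y ⟨α, hα⟩ ⟨t, ht⟩ x := by
      simp only [Gy, Gof, ht, dif_pos, hpc, Set.projIcc_of_mem zero_le_one hα]
    rw [e1, hY]
    simp only [nbhd]
    apply integral_congr_ae
    have hmem : ∀ᵐ β ∂ρ, β ∈ Set.Ioc (0:ℝ) 1 := ae_restrict_mem measurableSet_Ioc
    filter_upwards [hNae, hmem] with β h1 h2
    rw [h β ⟨h2.1.le, h2.2⟩, hlaw β h1]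
  have hmain : ∀ t, t ≤ T → ∀ α ∈ Set.Icc (0:ℝ) 1,
      μ t α = stateLaw P μ0 (Gy Y α) (πe α) t := by
    intro t
    induction t with
    | zero => intro _ α _; rfl
    | succ t ih =>
      intro ht α hα
      have ih' := ih (by omega)
      have h2 := hnb t (by omega) ih' α hα
      ext x'
      rw [hμ] at h2 ih' ⊢
      simp only [muRec, stateLaw, h2, ih' α hα]
  have hnbhd : ∀ α ∈ Set.Icc (0:ℝ) 1, ∀ t < T, nbhd W (μ t) α = Gy Y α t :=
    fun α hα t ht => hnb t ht (hmain t ht.le) α hα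
  refine ⟨πe, μ, ⟨hπm, fun α _ => hπ α, ⟨muRec_meas hW P hPc μ0 πe hπm, fun _ _ => rfl,
    fun _ _ _ _ => rfl⟩, ?_⟩, muRec_simplex W P hP μ0 hμ0 πe hπ⟩
  intro α hα π' hπ'
  have hJ : ∀ π, Jmf T r P μ0 (fun t => nbhd W (μ t) α) π = Jmf T r P μ0 (Gy Y α) π := by
    intro π
    apply Jmf_congr
    · intro t ht x u; simp only [hnbhd α hα t ht]
    · intro t ht x u; simp only [hnbhd α hα t ht]
  rw [hJ, hJ]
  refine (Jmf_le T r P hP μ0 hμ0 _ _ hπ').trans ?_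
  by_cases h : α ∈ N
  · rw [hπb α h, Jmf_greedy]
  · refine (hNg α h).2.2.trans (le_of_eq ?_)
    rw [Jmf_eq]
    refine Finset.sum_congr rfl fun t _ => Finset.sum_congr rfl fun x _ =>
      Finset.sum_congr rfl fun u _ => ?_
    rw [hlaw α h, hπg α h, condPol_mul (fun j => m j α) (fun j => hm0 j α)]

/-- retraction onto sub-probability vectors -/
noncomputable def retr {𝒳 : Type*} [Fintype 𝒳] (ν : 𝒳 → ℝ) : 𝒳 → ℝ :=
  fun x => max (ν x) 0 / max 1 (∑ y, max (ν y) 0)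

theorem retr_cont {𝒳 : Type*} [Fintype 𝒳] : Continuous (retr : (𝒳 → ℝ) → 𝒳 → ℝ) := by
  unfold retr
  refine continuous_pi fun x => Continuous.div (by fun_prop) (by fun_prop) fun ν => ?_
  have : (0:ℝ) < max 1 (∑ y, max (ν y) 0) := lt_of_lt_of_le one_pos (le_max_left _ _)
  exact this.ne'

theorem retr_mem {𝒳 : Type*} [Fintype 𝒳] (ν : 𝒳 → ℝ) : retr ν ∈ subProb 𝒳 := by
  have h : (0:ℝ) < max 1 (∑ y, max (ν y) 0) := lt_of_lt_of_le one_pos (le_max_left _ _)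
  refine ⟨fun x => div_nonneg (le_max_right _ _) h.le, ?_⟩
  unfold retr
  rw [← Finset.sum_div, div_le_one h]
  exact le_max_right _ _

theorem retr_id {𝒳 : Type*} [Fintype 𝒳] (ν : 𝒳 → ℝ) (hν : ν ∈ subProb 𝒳) : retr ν = ν := by
  have h1 : ∀ x, max (ν x) 0 = ν x := fun x => max_eq_left (hν.1 x)
  ext x
  simp only [retr, h1, max_eq_left hν.2, div_one]

theorem l1_cont {𝒳 : Type*} [Fintype 𝒳] (ν : 𝒳 → ℝ) :
    Tendsto (fun ν' => l1dist (retr ν') (retr ν)) (nhds ν) (nhds 0) := by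
  have hc : Continuous fun ν' : 𝒳 → ℝ => l1dist (retr ν') (retr ν) := by
    unfold l1dist
    refine continuous_finsetSum _ fun x _ => ?_
    exact (((continuous_apply x).comp retr_cont).sub continuous_const).abs
  have h0 : l1dist (retr ν) (retr ν) = 0 := by simp [l1dist]
  have := hc.tendsto ν
  rwa [h0] at this

theorem lip_cont {𝒳 : Type*} [Fintype 𝒳] (g : (𝒳 → ℝ) → ℝ) (L : ℝ)
    (hg : ∀ ν ν', ν ∈ subProb 𝒳 → ν' ∈ subProb 𝒳 → |g ν - g ν'| ≤ L * l1dist ν ν') :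
    Continuous fun ν => g (retr ν) := by
  rw [continuous_iff_continuousAt]
  intro ν
  rw [ContinuousAt, tendsto_iff_dist_tendsto_zero]
  have h := (l1_cont ν).const_mul L
  rw [mul_zero] at h
  refine squeeze_zero (fun _ => dist_nonneg) (fun ν' => ?_) h
  rw [Real.dist_eq]
  exact hg _ _ (retr_mem _) (retr_mem _)

end Main

/-- under Assumption (Lip) (r, P Lipschitz w.r.t. the L¹ norm on ℬ₁(𝒳) and
W Lipschitz), there exists a Graphon Mean Field Equilibrium: a measurable policy ensemble
𝛑 and measurable mean field ensemble 𝛍 with 𝛍 = Ψ(𝛑) and, for every α ∈ [0,1], π^α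
maximizing π ↦ J^𝛍_α(π) over all Markov policies. -/
theorem gmfe_exists {𝒳 𝒰 : Type*} [Fintype 𝒳] [Nonempty 𝒳] [Fintype 𝒰] [Nonempty 𝒰]
    (T : ℕ) (μ0 : 𝒳 → ℝ) (hμ0 : μ0 ∈ simplex 𝒳)
    (P : 𝒳 → 𝒰 → (𝒳 → ℝ) → 𝒳 → ℝ) (hP : IsKernel P)
    (r : 𝒳 → 𝒰 → (𝒳 → ℝ) → ℝ)
    (W : ℝ → ℝ → ℝ) (hW : IsGraphon W)
    (Lr LP LW : ℝ)
    (hrLip : RewardLipschitz r Lr) (hPLip : KernelLipschitz P LP)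
    (hWLip : GraphonLipschitz W LW) :
    ∃ (πe : ℝ → ℕ → 𝒳 → 𝒰 → ℝ) (μ : ℕ → ℝ → 𝒳 → ℝ), IsGMFE T W P r μ0 πe μ := by
  have hP1 : ∀ x u x', Continuous fun ν => P x u (retr ν) x' := by
    intro x u x'
    apply lip_cont (fun ν => P x u ν x') LP
    intro ν ν' hν hν'
    refine le_trans ?_ (hPLip x u ν ν' hν hν')
    exact Finset.single_le_sum (f := fun y => |P x u ν y - P x u ν' y|)
      (fun y _ => abs_nonneg _) (Finset.mem_univ x')
  have hr1 : ∀ x u, Continuous fun ν => r x u (retr ν) := by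
    intro x u
    apply lip_cont (fun ν => r x u ν) Lr
    intro ν ν' hν hν'
    exact hrLip x u ν ν' hν hν'
  obtain ⟨πe, μ, ⟨h1, h2, ⟨h3, h4, h5⟩, h6⟩, h7⟩ := gmfe_cont T μ0 hμ0
    (fun x u ν => P x u (retr ν)) (fun x u ν => hP x u _ (retr_mem ν))
    (fun x u => continuous_pi (hP1 x u)) (fun x u ν => r x u (retr ν)) hr1 W hW LW hWLip
  have hret : ∀ t α, retr (nbhd W (μ t) α) = nbhd W (μ t) α := fun t α =>
    retr_id _ (nbhd_subProb hW (μ t) (h3 t) (h7 t) α)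
  refine ⟨πe, μ, h1, h2, ⟨h3, h4, ?_⟩, ?_⟩
  · intro t α hα x'
    rw [h5 t α hα x']
    simp only [hret]
  · intro α hα π' hπ'
    have hJ : ∀ π, Jmf T (fun x u ν => r x u (retr ν)) (fun x u ν => P x u (retr ν)) μ0
        (fun t => nbhd W (μ t) α) π = Jmf T r P μ0 (fun t => nbhd W (μ t) α) π := by
      intro π
      apply Jmf_congr
      · intro t _ x u; simp only [hret]
      · intro t _ x u; simp only [hret]
    have := h6 α hα π' hπ'
    rw [hJ, hJ] at this
    exact this

end GMFG
end

section
/- Under Assumption (Lip), let, for each M, (𝛑, 𝛍) be a solution of the M equivalence classes method, let 𝛍̄ = Ψ(𝛑) be the exact mean field ensemble generated by the block-constant policy ensemble 𝛑, and let μ^{α_m} denote the method's approximate mean field on class Ĩ_m. Then for every t ∈ {0,…,T}, max_{m=1,…,M} sup_{α∈Ĩ_m} ‖μ̄^α_t − μ^{α_m}_t‖₁ → 0 as M → ∞, uniformly over the equivalence classes. -/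
open MeasureTheory Filter
open scoped BigOperators

namespace GMFG

variable {𝒳 𝒰 : Type*}

lemma mix_mem [Fintype 𝒳] {ι : Type*} [Fintype ι] (p : ι → ℝ) (k : ι → 𝒳 → ℝ)
    (hp : p ∈ simplex ι) (hk : ∀ i, k i ∈ simplex 𝒳) :
    (fun x' => ∑ i, p i * k i x') ∈ simplex 𝒳 := by
  refine ⟨fun x' => Finset.sum_nonneg fun i _ => mul_nonneg (hp.1 i) ((hk i).1 x'), ?_⟩
  rw [Finset.sum_comm]
  simp_rw [← Finset.mul_sum, (hk _).2, mul_one]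
  exact hp.2

lemma mix_dist [Fintype 𝒳] {ι : Type*} [Fintype ι] (p q : ι → ℝ) (k k' : ι → 𝒳 → ℝ) (D : ℝ)
    (hq : q ∈ simplex ι) (hk : ∀ i, k i ∈ simplex 𝒳)
    (hD : ∀ i, l1dist (k i) (k' i) ≤ D) :
    l1dist (fun x' => ∑ i, p i * k i x') (fun x' => ∑ i, q i * k' i x') ≤ l1dist p q + D := by
  have h1 : ∀ x', |∑ i, p i * k i x' - ∑ i, q i * k' i x'|
      ≤ ∑ i, (|p i - q i| * k i x' + q i * |k i x' - k' i x'|) := by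
    intro x'
    rw [← Finset.sum_sub_distrib]
    refine (Finset.abs_sum_le_sum_abs _ _).trans (Finset.sum_le_sum fun i _ => ?_)
    have : p i * k i x' - q i * k' i x' = (p i - q i) * k i x' + q i * (k i x' - k' i x') := by
      ring
    rw [this]
    refine (abs_add_le _ _).trans ?_
    rw [abs_mul, abs_mul, abs_of_nonneg ((hk i).1 x'), abs_of_nonneg (hq.1 i)]
  calc l1dist (fun x' => ∑ i, p i * k i x') (fun x' => ∑ i, q i * k' i x')
      ≤ ∑ x', ∑ i, (|p i - q i| * k i x' + q i * |k i x' - k' i x'|) :=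
        Finset.sum_le_sum fun x' _ => h1 x'
    _ = ∑ i, (|p i - q i| + q i * l1dist (k i) (k' i)) := by
        rw [Finset.sum_comm]
        refine Finset.sum_congr rfl fun i _ => ?_
        rw [Finset.sum_add_distrib, ← Finset.mul_sum, ← Finset.mul_sum, (hk i).2, mul_one]
        rfl
    _ ≤ ∑ i, (|p i - q i| + q i * D) :=
        Finset.sum_le_sum fun i _ => by
          have := mul_le_mul_of_nonneg_left (hD i) (hq.1 i)
          linarith
    _ = l1dist p q + D := by
        rw [Finset.sum_add_distrib, ← Finset.sum_mul, hq.2, one_mul]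
        rfl

lemma l1dist_self [Fintype 𝒳] (p : 𝒳 → ℝ) : l1dist p p = 0 := by simp [l1dist]

lemma l1dist_nonneg [Fintype 𝒳] (p q : 𝒳 → ℝ) : 0 ≤ l1dist p q :=
  Finset.sum_nonneg fun _ _ => abs_nonneg _

lemma step_dist [Fintype 𝒳] [Fintype 𝒰] (P : 𝒳 → 𝒰 → (𝒳 → ℝ) → 𝒳 → ℝ) (hP : IsKernel P)
    (L : ℝ) (hL : KernelLipschitz P L) (π : 𝒳 → 𝒰 → ℝ) (hπ : ∀ x, π x ∈ simplex 𝒰)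
    (p q G G' : 𝒳 → ℝ) (hq : q ∈ simplex 𝒳)
    (hG : G ∈ subProb 𝒳) (hG' : G' ∈ subProb 𝒳) :
    l1dist (fun x' => ∑ x, p x * ∑ u, π x u * P x u G x')
      (fun x' => ∑ x, q x * ∑ u, π x u * P x u G' x') ≤ l1dist p q + |L| * l1dist G G' := by
  refine mix_dist p q (fun x x' => ∑ u, π x u * P x u G x')
    (fun x x' => ∑ u, π x u * P x u G' x') _ hq
    (fun x => mix_mem _ _ (hπ x) fun u => hP x u G hG) fun x => ?_
  refine (mix_dist (π x) (π x) (fun u => P x u G) (fun u => P x u G') (|L| * l1dist G G')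
    (hπ x) (fun u => hP x u G hG) fun u => ?_).trans ?_
  · exact (hL x u G G' hG hG').trans
      (mul_le_mul_of_nonneg_right (le_abs_self L) (l1dist_nonneg _ _))
  · rw [l1dist_self, zero_add]

lemma simplex_le_one [Fintype 𝒳] {p : 𝒳 → ℝ} (hp : p ∈ simplex 𝒳) (x : 𝒳) : p x ≤ 1 := by
  rw [← hp.2]
  exact Finset.single_le_sum (fun i _ => hp.1 i) (Finset.mem_univ x)

lemma nbhd_integrable [Fintype 𝒳] (W : ℝ → ℝ → ℝ) (hW : IsGraphon W) (ν : ℝ → 𝒳 → ℝ)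
    (hm : ∀ x, Measurable fun β => ν β x)
    (hν : ∀ β ∈ Set.Ioc (0:ℝ) 1, ν β ∈ simplex 𝒳) (α : ℝ) (x : 𝒳) :
    IntegrableOn (fun β => W α β * ν β x) (Set.Ioc (0:ℝ) 1) := by
  have hWm : Measurable fun β => W α β := hW.1.comp (measurable_const.prodMk measurable_id)
  refine Measure.integrableOn_of_bounded (M := 1) (by simp) 
    (hWm.mul (hm x)).aestronglyMeasurable ?_
  refine (ae_restrict_iff' measurableSet_Ioc).2 (Eventually.of_forall fun β hβ => ?_)
  rw [Real.norm_eq_abs, abs_of_nonneg (mul_nonneg (hW.2.2 α β).1 ((hν β hβ).1 x))]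
  exact mul_le_one₀ (hW.2.2 α β).2 ((hν β hβ).1 x) (simplex_le_one (hν β hβ) x)

lemma nbhd_mem [Fintype 𝒳] (W : ℝ → ℝ → ℝ) (hW : IsGraphon W) (ν : ℝ → 𝒳 → ℝ)
    (hm : ∀ x, Measurable fun β => ν β x)
    (hν : ∀ β ∈ Set.Ioc (0:ℝ) 1, ν β ∈ simplex 𝒳) (α : ℝ) :
    nbhd W ν α ∈ subProb 𝒳 := by
  refine ⟨fun x => setIntegral_nonneg measurableSet_Ioc fun β hβ =>
    mul_nonneg (hW.2.2 α β).1 ((hν β hβ).1 x), ?_⟩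
  unfold nbhd
  rw [← integral_finsetSum _ fun x _ => nbhd_integrable W hW ν hm hν α x]
  calc ∫ β in Set.Ioc (0:ℝ) 1, ∑ x, W α β * ν β x
      ≤ ∫ β in Set.Ioc (0:ℝ) 1, (1:ℝ) := by
        refine setIntegral_mono_on
          (integrable_finsetSum _ fun x _ => nbhd_integrable W hW ν hm hν α x)
          (by simp) measurableSet_Ioc fun β hβ => ?_
        rw [← Finset.mul_sum, (hν β hβ).2, mul_one]
        exact (hW.2.2 α β).2
    _ ≤ 1 := by simp

lemma approxNbhd_mem [Fintype 𝒳] {M : ℕ} (hM : 0 < M) (W : ℝ → ℝ → ℝ) (hW : IsGraphon W)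
    (ν : Fin M → 𝒳 → ℝ) (hν : ∀ n, ν n ∈ simplex 𝒳) (m : Fin M) :
    approxNbhd W ν m ∈ subProb 𝒳 := by
  have hM' : (0:ℝ) < M := by exact_mod_cast hM
  refine ⟨fun x => mul_nonneg (by positivity) (Finset.sum_nonneg fun n _ =>
    mul_nonneg (hW.2.2 _ _).1 ((hν n).1 x)), ?_⟩
  unfold approxNbhd
  rw [← Finset.mul_sum, Finset.sum_comm]
  simp_rw [← Finset.mul_sum, (hν _).2, mul_one]
  have : ∑ n : Fin M, W (rep M m) (rep M n) ≤ ∑ n : Fin M, (1:ℝ) :=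
    Finset.sum_le_sum fun n _ => (hW.2.2 _ _).2
  simp only [Finset.sum_const, Finset.card_univ, Fintype.card_fin, nsmul_eq_mul, mul_one] at this
  calc (M:ℝ)⁻¹ * _ ≤ (M:ℝ)⁻¹ * M := mul_le_mul_of_nonneg_left this (by positivity)
    _ = 1 := inv_mul_cancel₀ hM'.ne'

/-- The m-th equivalence class. -/
def blk (M : ℕ) (m : Fin M) : Set ℝ := Set.Ioc (((m : ℕ) : ℝ) / M) ((((m : ℕ) : ℝ) + 1) / M)

lemma blk_sub {M : ℕ} (m : Fin M) : blk M m ⊆ Set.Ioc 0 1 := by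
  intro α h
  have hM' : (0:ℝ) < M := by exact_mod_cast m.pos
  have hm : ((m:ℕ):ℝ) + 1 ≤ M := by exact_mod_cast m.2
  refine ⟨lt_of_le_of_lt (by positivity) h.1, h.2.trans ?_⟩
  rw [div_le_one hM']
  exact hm

lemma blk_exists {M : ℕ} (hM : 0 < M) {α : ℝ} (h : α ∈ Set.Ioc (0:ℝ) 1) :
    ∃ m : Fin M, α ∈ blk M m := by
  have hM' : (0:ℝ) < M := by exact_mod_cast hM
  have hpos : 0 < α * M := mul_pos h.1 hM'
  have h1 : 0 < ⌈α * M⌉₊ := Nat.ceil_pos.2 hpos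
  have h2 : ⌈α * M⌉₊ ≤ M := Nat.ceil_le.2 (by nlinarith [h.2])
  obtain ⟨k, hk⟩ : ∃ k, ⌈α * M⌉₊ = k + 1 := ⟨⌈α * M⌉₊ - 1, by omega⟩
  refine ⟨⟨k, by omega⟩, ?_, ?_⟩
  · rw [div_lt_iff₀ hM']
    exact Nat.lt_ceil.1 (by simp only []; omega)
  · rw [le_div_iff₀ hM']
    have := Nat.le_ceil (α * M)
    rw [hk] at this
    exact_mod_cast this

lemma rep_mem {M : ℕ} (m : Fin M) : rep M m ∈ blk M m := by
  have hM' : (0:ℝ) < M := by exact_mod_cast m.pos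
  refine ⟨?_, le_rfl⟩
  unfold rep
  gcongr
  linarith

lemma blk_close {M : ℕ} (m : Fin M) {α β : ℝ} (hα : α ∈ blk M m) (hβ : β ∈ blk M m) :
    |α - β| ≤ 1 / M := by
  have h1 := hα.1
  have h2 := hα.2
  have h3 := hβ.1
  have h4 := hβ.2
  rw [add_div] at h2 h4
  rw [abs_le]
  constructor <;> linarith

lemma integral_blk {M : ℕ} (hM : 0 < M) (f : ℝ → ℝ) (hf : IntegrableOn f (Set.Ioc (0:ℝ) 1)) :
    ∫ β in Set.Ioc (0:ℝ) 1, f β = ∑ n : Fin M, ∫ β in blk M n, f β := by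
  have hM' : (0:ℝ) < M := by exact_mod_cast hM
  have key := intervalIntegral.sum_integral_adjacent_intervals (f := f) (μ := volume)
    (a := fun k : ℕ => (k:ℝ) / M) (n := M) (fun k hk => by
      rw [intervalIntegrable_iff_integrableOn_Ioc_of_le (by gcongr; simp)]
      have := hf.mono_set (blk_sub (⟨k, hk⟩ : Fin M))
      simpa [blk] using this)
  simp only [Nat.cast_zero, zero_div, div_self hM'.ne'] at key
  rw [intervalIntegral.integral_of_le zero_le_one] at key
  rw [← key, Finset.sum_range]
  refine Finset.sum_congr rfl fun n _ => ?_
  rw [intervalIntegral.integral_of_le (by gcongr; simp)]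
  simp [blk]

lemma vol_blk {M : ℕ} (m : Fin M) : volume.real (blk M m) = 1 / M := by
  have hM' : (0:ℝ) < M := by exact_mod_cast m.pos
  have : (((m : ℕ) : ℝ) / M) ≤ ((((m : ℕ) : ℝ) + 1) / M) := by gcongr; linarith
  unfold blk
  rw [Real.volume_real_Ioc_of_le this]
  ring

lemma nbhd_dist [Fintype 𝒳] {M : ℕ} (hM : 0 < M) (W : ℝ → ℝ → ℝ) (hW : IsGraphon W) (LW : ℝ)
    (hL : GraphonLipschitz W LW) (ν : ℝ → 𝒳 → ℝ) (hm : ∀ x, Measurable fun β => ν β x)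
    (ν' : Fin M → 𝒳 → ℝ)
    (hν : ∀ β ∈ Set.Ioc (0:ℝ) 1, ν β ∈ simplex 𝒳) (hν' : ∀ n, ν' n ∈ simplex 𝒳) (D : ℝ)
    (hD : ∀ n, ∀ β ∈ blk M n, l1dist (ν β) (ν' n) ≤ D) (m : Fin M) (α : ℝ) (hα : α ∈ blk M m) :
    l1dist (nbhd W ν α) (approxNbhd W ν' m) ≤ |LW| * (2 / M) + D := by
  have hM' : (0:ℝ) < M := by exact_mod_cast hM
  have hfin : ∀ n : Fin M, volume (blk M n) ≠ ⊤ := fun n => by simp [blk]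
  have hms : ∀ n : Fin M, MeasurableSet (blk M n) := fun n => measurableSet_Ioc
  have hint : ∀ (n : Fin M) x, IntegrableOn
      (fun β => W α β * ν β x - W (rep M m) (rep M n) * ν' n x) (blk M n) := fun n x =>
    ((nbhd_integrable W hW ν hm hν α x).mono_set (blk_sub n)).sub
      (integrableOn_const (hfin n))
  have h1 : ∀ x, nbhd W ν α x - approxNbhd W ν' m x =
      ∑ n : Fin M, ∫ β in blk M n, (W α β * ν β x - W (rep M m) (rep M n) * ν' n x) := by
    intro x
    unfold nbhd approxNbhd
    rw [integral_blk hM _ (nbhd_integrable W hW ν hm hν α x), Finset.mul_sum,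
      ← Finset.sum_sub_distrib]
    refine Finset.sum_congr rfl fun n _ => ?_
    rw [integral_sub ((nbhd_integrable W hW ν hm hν α x).mono_set (blk_sub n))
      (integrableOn_const (hfin n)), setIntegral_const, vol_blk]
    simp
  have h2 : ∀ n : Fin M, ∀ β ∈ blk M n,
      ∑ x, |W α β * ν β x - W (rep M m) (rep M n) * ν' n x| ≤ |LW| * (2 / M) + D := by
    intro n β hβ
    have hWd : |W α β - W (rep M m) (rep M n)| ≤ |LW| * (2 / M) := by
      have i1 := Set.Ioc_subset_Icc_self (blk_sub m hα)
      have i2 := Set.Ioc_subset_Icc_self (blk_sub n hβ)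
      have i3 := Set.Ioc_subset_Icc_self (blk_sub m (rep_mem m))
      have i4 := Set.Ioc_subset_Icc_self (blk_sub n (rep_mem n))
      have c1 := blk_close m hα (rep_mem m)
      have c2 := blk_close n hβ (rep_mem n)
      calc _ ≤ LW * (|α - rep M m| + |β - rep M n|) := hL _ _ _ _ i1 i2 i3 i4
        _ ≤ |LW| * (|α - rep M m| + |β - rep M n|) :=
          mul_le_mul_of_nonneg_right (le_abs_self _) (by positivity)
        _ ≤ |LW| * (1 / M + 1 / M) :=
          mul_le_mul_of_nonneg_left (add_le_add c1 c2) (abs_nonneg _)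
        _ = _ := by ring
    have hb := blk_sub n hβ
    calc ∑ x, |W α β * ν β x - W (rep M m) (rep M n) * ν' n x|
        ≤ ∑ x, (|W α β - W (rep M m) (rep M n)| * ν β x + 1 * |ν β x - ν' n x|) := by
          refine Finset.sum_le_sum fun x _ => ?_
          have : W α β * ν β x - W (rep M m) (rep M n) * ν' n x =
            (W α β - W (rep M m) (rep M n)) * ν β x
              + W (rep M m) (rep M n) * (ν β x - ν' n x) := by ring
          rw [this]
          refine (abs_add_le _ _).trans ?_
          rw [abs_mul, abs_mul, abs_of_nonneg ((hν β hb).1 x),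
            abs_of_nonneg (hW.2.2 (rep M m) (rep M n)).1]
          gcongr
          exact (hW.2.2 _ _).2
      _ = |W α β - W (rep M m) (rep M n)| + l1dist (ν β) (ν' n) := by
          simp_rw [one_mul]
          rw [Finset.sum_add_distrib, ← Finset.mul_sum, (hν β hb).2, mul_one]
          rfl
      _ ≤ _ := add_le_add hWd (hD n β hβ)
  have h3 : ∀ n : Fin M,
      ∑ x, |∫ β in blk M n, (W α β * ν β x - W (rep M m) (rep M n) * ν' n x)|
        ≤ (|LW| * (2 / M) + D) * (1 / M) := by
    intro n
    calc _ ≤ ∑ x, ∫ β in blk M n, |W α β * ν β x - W (rep M m) (rep M n) * ν' n x| :=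
          Finset.sum_le_sum fun x _ => abs_integral_le_integral_abs
      _ = ∫ β in blk M n, ∑ x, |W α β * ν β x - W (rep M m) (rep M n) * ν' n x| :=
          (integral_finsetSum _ fun x _ => (hint n x).abs).symm
      _ ≤ ∫ β in blk M n, (|LW| * (2 / M) + D) :=
          setIntegral_mono_on (integrable_finsetSum _ fun x _ => (hint n x).abs)
            (integrableOn_const (hfin n)) (hms n) (h2 n)
      _ = _ := by rw [setIntegral_const, vol_blk, smul_eq_mul, mul_comm]
  unfold l1dist
  calc _ ≤ ∑ x, ∑ n : Fin M,
        |∫ β in blk M n, (W α β * ν β x - W (rep M m) (rep M n) * ν' n x)| :=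
        Finset.sum_le_sum fun x _ => by
          rw [h1 x]
          exact Finset.abs_sum_le_sum_abs _ _
    _ ≤ ∑ n : Fin M, (|LW| * (2 / M) + D) * (1 / M) := by
        rw [Finset.sum_comm]
        exact Finset.sum_le_sum fun n _ => h3 n
    _ = _ := by
        simp only [Finset.sum_const, Finset.card_univ, Fintype.card_fin, nsmul_eq_mul]
        field_simp

/-- Constants of the error recursion. -/
noncomputable def errC (LP LW : ℝ) : ℕ → ℝ
  | 0 => 0
  | (t+1) => errC LP LW t + |LP| * (|LW| * 2 + errC LP LW t)

/-- under Assumption (Lip), for solutions of the M equivalence classes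
method (one for each M), the exact mean field ensemble 𝛍̄ = Ψ(𝛑) generated by the
block-constant policy ensemble 𝛑 converges to the method's approximate mean field,
uniformly over the equivalence classes: for every t ∈ {0,…,T},
max_m sup_{α∈Ĩ_m} ‖μ̄^α_t − μ^{α_m}_t‖₁ → 0 as M → ∞. -/
theorem eq_class_mean_field_convergence
    {𝒳 𝒰 : Type*} [Fintype 𝒳] [Nonempty 𝒳] [Fintype 𝒰] [Nonempty 𝒰]
    (T : ℕ) (μ0 : 𝒳 → ℝ) (hμ0 : μ0 ∈ simplex 𝒳)
    (P : 𝒳 → 𝒰 → (𝒳 → ℝ) → 𝒳 → ℝ) (hP : IsKernel P)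
    (r : 𝒳 → 𝒰 → (𝒳 → ℝ) → ℝ)
    (Lr LP LW : ℝ) (hrLip : RewardLipschitz r Lr) (hPLip : KernelLipschitz P LP)
    (W : ℝ → ℝ → ℝ) (hW : IsGraphon W) (hWLip : GraphonLipschitz W LW)
    (πmF : (M : ℕ) → Fin M → ℕ → 𝒳 → 𝒰 → ℝ)
    (hsol : ∀ M : ℕ, IsEqClassSolution T W P r μ0 (πmF M))
    (πeF : (M : ℕ) → ℝ → ℕ → 𝒳 → 𝒰 → ℝ)
    (hblock : ∀ (M : ℕ) (m : Fin M) (α : ℝ),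
      α ∈ Set.Ioc (((m : ℕ) : ℝ) / M) ((((m : ℕ) : ℝ) + 1) / M) → πeF M α = πmF M m)
    (hblock0 : ∀ (M : ℕ) (m : Fin M), (m : ℕ) = 0 → πeF M 0 = πmF M m)
    (μbarF : (M : ℕ) → ℕ → ℝ → 𝒳 → ℝ)
    (hmf : ∀ M : ℕ, 0 < M → IsMeanFieldOf W P μ0 (πeF M) (μbarF M)) :
    ∀ t ≤ T, ∀ ε > (0:ℝ), ∃ M₀ : ℕ, ∀ M > M₀, ∀ m : Fin M,
      ∀ α ∈ Set.Ioc (((m : ℕ) : ℝ) / M) ((((m : ℕ) : ℝ) + 1) / M),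
        l1dist (μbarF M t α) (approxMF W P μ0 (πmF M) t m) < ε := by
  have main : ∀ M : ℕ, 0 < M → ∀ t : ℕ,
      (∀ m : Fin M, approxMF W P μ0 (πmF M) t m ∈ simplex 𝒳) ∧
      ∀ m : Fin M, ∀ α ∈ blk M m, μbarF M t α ∈ simplex 𝒳 ∧
        l1dist (μbarF M t α) (approxMF W P μ0 (πmF M) t m) ≤ errC LP LW t / M := by
    intro M hM t
    obtain ⟨hmeas, hzero, hsucc⟩ := hmf M hM
    have hpol : ∀ (m : Fin M) t x, πmF M m t x ∈ simplex 𝒰 := fun m t x => (hsol M).1 m t x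
    induction t with
    | zero =>
      refine ⟨fun m => hμ0, fun m α hα => ?_⟩
      rw [hzero α (Set.Ioc_subset_Icc_self (blk_sub m hα))]
      refine ⟨hμ0, ?_⟩
      simp only [approxMF, l1dist_self, errC, zero_div, le_refl]
    | succ t ih =>
      obtain ⟨ih1, ih2⟩ := ih
      have hbar : ∀ β ∈ Set.Ioc (0:ℝ) 1, μbarF M t β ∈ simplex 𝒳 := fun β hβ => by
        obtain ⟨n, hn⟩ := blk_exists hM hβ
        exact (ih2 n β hn).1
      have hG' := fun m => approxNbhd_mem hM W hW _ ih1 m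
      refine ⟨fun m => mix_mem _ _ (ih1 m) fun x => mix_mem _ _ (hpol m t x) fun u =>
        hP x u _ (hG' m), fun m α hα => ?_⟩
      have hG := nbhd_mem W hW _ (hmeas t) hbar α
      have heq : μbarF M (t+1) α = fun x' => ∑ x, μbarF M t α x *
          ∑ u, πmF M m t x u * P x u (nbhd W (μbarF M t) α) x' := by
        funext x'
        rw [hsucc t α (Set.Ioc_subset_Icc_self (blk_sub m hα)) x', hblock M m α hα]
      rw [heq]
      refine ⟨mix_mem _ _ (ih2 m α hα).1 fun x => mix_mem _ _ (hpol m t x) fun u =>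
        hP x u _ hG, ?_⟩
      refine (step_dist P hP LP hPLip (πmF M m t) (hpol m t) _ _ _ _ (ih1 m) hG (hG' m)).trans ?_
      have hd := nbhd_dist hM W hW LW hWLip _ (hmeas t) _ hbar ih1 (errC LP LW t / M)
        (fun n β hβ => (ih2 n β hβ).2) m α hα
      calc _ ≤ errC LP LW t / M + |LP| * (|LW| * (2 / M) + errC LP LW t / M) :=
            add_le_add (ih2 m α hα).2 (mul_le_mul_of_nonneg_left hd (abs_nonneg _))
        _ = _ := by
            simp only [errC]
            ring
  intro t _ ε hε
  obtain ⟨M₀, hM₀⟩ := exists_nat_gt (errC LP LW t / ε)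
  refine ⟨M₀, fun M hM m α hα => ?_⟩
  have hMpos : 0 < M := m.pos
  have hM' : (0:ℝ) < M := by exact_mod_cast hMpos
  refine ((main M hMpos t).2 m α hα).2.trans_lt ?_
  have : (M₀:ℝ) < M := by exact_mod_cast hM
  rw [div_lt_iff₀ hε] at hM₀
  rw [div_lt_iff₀ hM']
  nlinarith

end GMFG
end
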